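/- Let p be a prime, let A ⊆ ℤ/pℤ be a nonempty subset, write |2A| = 2|A| + r, and let α be the unique real root of the cubic 4x³ + 9x² + 6x − 1 (so α ≈ 0.136861). Suppose |2A| ≤ (2+α)|A| − 3 and |2A| ≤ (3/4)p. Then there exist arithmetic progressions P_A and P_{2A} in ℤ/pℤ with a common difference such that A ⊆ P_A, |P_A| ≤ |A| + r + 1, P_{2A} ⊆ 2A, and |P_{2A}| ≥ 2|A| − 1. -/

import Mathlib

/-!
Write `k = |A|` and `n = |2A|`.

*A dense half-arc.* Counting the solutions of `a + b = c` with `a, b ∈ A` and `c ∈ 2A` by Fourier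
analysis, together with Parseval and Cauchy-Schwarz, gives
`k (p - n) ≤ θ² n (p - k)` whenever all nontrivial exponential sums of `A` are at most `θ k`
(`card_mul_le_of_expSum_le`). For `θ = (1 + 2α) / 3` and `n ≤ 3p / 4` this is impossible, by the
cubic equation of `α` (`numeric_contradiction`), so some exponential sum exceeds
`(1 + 2α) k / 3 ≥ 2 (n + 3) / 3 - k`. A sum of unit vectors is large only if some half-plane
contains many of them (`norm_sum_le_of_halfPlane`), and thus, after a dilation, a half-arc contains
a subset `S` of `A` with `3 |S| > n + 3`.

*The integer theorem for the dense part.* A half-arc behaves like a set of integers: `S` is Freiman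
isomorphic to a set of integers with `|2S| ≤ n ≤ 3 |S| - 4`. Freiman's `3k - 4` theorem, deduced
from Kneser's theorem modulo the largest element (`freiman_normalized`), places `S` in a progression
of length `|2S| - |S| + 1`, and a counting argument (`exists_Icc_subset_add`) shows that `2S`
contains a progression of length `2 |S| - 1` with the same difference.

*From the dense part to the whole set.* Rescale so that this difference is `1`. The complement `C`
of `2A` avoids a long interval, hence lies in an arc too, and the set `C - S` is disjoint from `A`.
So `C - S` has at most `p - k` elements, and the asymmetric counting argument shows that it contains
a long interval. Therefore `A` lies in an arc of length at most `(p + 1) / 2`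
(`exists_window`), and the integer theorem applies to `A` itself.
-/

open Finset Pointwise

/-- `P` is an arithmetic progression in `ZMod p` with difference `g`. -/
def IsAPWith {p : ℕ} (g : ZMod p) (P : Finset (ZMod p)) : Prop :=
  ∃ a : ZMod p, ∃ k : ℕ, 1 ≤ k ∧ P = (Finset.range k).image (fun i : ℕ => a + (i : ZMod p) * g)

/-! ### Kneser's theorem -/

namespace Kneser

variable {G : Type*} [AddCommGroup G] [Fintype G] [DecidableEq G]

/-- The stabilizer (group of periods) of a finite set `C`, as a finite set. -/
def stab (C : Finset G) : Finset G := {g | ∀ x, g + x ∈ C ↔ x ∈ C}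

lemma mem_stab {C : Finset G} {g : G} : g ∈ stab C ↔ ∀ x, g + x ∈ C ↔ x ∈ C := by
  simp [stab]

lemma zero_mem_stab (C : Finset G) : (0 : G) ∈ stab C := by simp [mem_stab]

lemma add_mem_stab {C : Finset G} {g h : G} (hg : g ∈ stab C) (hh : h ∈ stab C) :
    g + h ∈ stab C := by
  rw [mem_stab] at *
  intro x
  rw [add_assoc, hg, hh]

lemma neg_mem_stab {C : Finset G} {g : G} (hg : g ∈ stab C) : -g ∈ stab C := by
  rw [mem_stab] at *
  intro x
  rw [← hg, add_neg_cancel_left]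

lemma sub_mem_stab {C : Finset G} {g h : G} (hg : g ∈ stab C) (hh : h ∈ stab C) :
    g - h ∈ stab C := by
  rw [sub_eq_add_neg]; exact add_mem_stab hg (neg_mem_stab hh)

/-- If `T ⊆ H₁` and `R ⊆ H₂`, then `(t, r) ↦ x + t + r` is at most `|H₁ ∩ H₂|`-to-one on
`T × R`. -/
lemma card_mul_card_le {C₁ C₂ T R D : Finset G} {x : G}
    (hT : T ⊆ stab C₁) (hR : R ⊆ stab C₂) (hD : ∀ t ∈ T, ∀ r ∈ R, x + t + r ∈ D) :
    #T * #R ≤ #(stab C₁ ∩ stab C₂) * #D := by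
  rw [← card_product]
  refine card_le_mul_card_image_of_maps_to (f := fun z : G × G => x + z.1 + z.2) ?_ _ ?_
  · rintro ⟨t, r⟩ h
    rw [Finset.mem_product] at h
    exact hD t h.1 r h.2
  · intro d _
    rcases Finset.eq_empty_or_nonempty ({z ∈ T ×ˢ R | x + z.1 + z.2 = d}) with h | ⟨⟨t₀, r₀⟩, h₀⟩
    · simp [h]
    · simp only [Finset.mem_filter, Finset.mem_product] at h₀
      obtain ⟨⟨ht₀, hr₀⟩, hd⟩ := h₀
      refine card_le_card_of_injOn (fun z => z.1 - t₀) ?_ ?_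
      · rintro ⟨t, r⟩ h
        simp only [Finset.coe_filter, Finset.mem_product, Set.mem_ofPred_eq] at h
        obtain ⟨⟨ht, hr⟩, h⟩ := h
        simp only [Finset.coe_inter, Set.mem_inter_iff, Finset.mem_coe]
        refine ⟨sub_mem_stab (hT ht) (hT ht₀), ?_⟩
        have : t - t₀ = r₀ - r := by
          rw [← hd] at h
          have h' : t + r = t₀ + r₀ := by simpa [add_assoc] using h
          rw [sub_eq_sub_iff_add_eq_add, h', add_comm]
        rw [this]
        exact sub_mem_stab (hR hr₀) (hR hr)
      · rintro ⟨t, r⟩ h ⟨t', r'⟩ h' hh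
        simp only [Finset.coe_filter, Finset.mem_product, Set.mem_ofPred_eq] at h h'
        have ht : t = t' := by simpa using hh
        subst ht
        have : r = r' := by
          have := h.2.trans h'.2.symm
          simpa using this
        rw [this]

/-- One half of the union lemma: a point of `C₂ \ C₁` together with the two strict inequalities
forces the stabilizer of `C₁` to be the larger one. -/
lemma card_stab_lt {C₁ C₂ : Finset G} {x : G} (hx₂ : x ∈ C₂) (hx₁ : x ∉ C₁)
    (h₁ : #(C₂ \ C₁) + #(stab C₁ ∩ stab C₂) < #(stab C₁))
    (h₂ : #(C₁ \ C₂) + #(stab C₁ ∩ stab C₂) < #(stab C₂)) :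
    #(stab C₂) < #(stab C₁) := by
  set L := stab C₁ ∩ stab C₂ with hL
  have hL1 : ∀ {l}, l ∈ L → l ∈ stab C₁ := fun h => (Finset.mem_inter.1 h).1
  have hL2 : ∀ {l}, l ∈ L → l ∈ stab C₂ := fun h => (Finset.mem_inter.1 h).2
  -- the rows and columns through `x`, split according to membership
  set T := {h ∈ stab C₁ | x + h ∈ C₂} with hT
  set T' := {h ∈ stab C₁ | ¬ x + h ∈ C₂} with hT'
  set R := {h ∈ stab C₂ | ¬ x + h ∈ C₁} with hR
  set R' := {h ∈ stab C₂ | x + h ∈ C₁} with hR'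
  have cT : #T + #T' = #(stab C₁) := Finset.card_filter_add_card_filter_not _
  have cR : #R' + #R = #(stab C₂) := Finset.card_filter_add_card_filter_not _
  have e1 : #T * #R ≤ #L * #(C₂ \ C₁) := by
    refine card_mul_card_le (x := x) (Finset.filter_subset _ _) (Finset.filter_subset _ _) ?_
    intro t ht r hr
    rw [Finset.mem_filter] at ht hr
    rw [Finset.mem_sdiff]
    constructor
    · rw [show x + t + r = r + (x + t) by abel, mem_stab.1 hr.1]; exact ht.2
    · rw [show x + t + r = t + (x + r) by abel, mem_stab.1 ht.1]; exact hr.2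
  have e2 : #T' * #R' ≤ #L * #(C₁ \ C₂) := by
    refine card_mul_card_le (x := x) (Finset.filter_subset _ _) (Finset.filter_subset _ _) ?_
    intro t ht r hr
    rw [Finset.mem_filter] at ht hr
    rw [Finset.mem_sdiff]
    constructor
    · rw [show x + t + r = t + (x + r) by abel, mem_stab.1 ht.1]; exact hr.2
    · rw [show x + t + r = r + (x + t) by abel, mem_stab.1 hr.1]; exact ht.2
  have lT : #L ≤ #T := by
    refine card_le_card fun l hl => ?_
    rw [hT, Finset.mem_filter, add_comm, mem_stab.1 (hL2 hl)]
    exact ⟨hL1 hl, hx₂⟩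
  have lR : #L ≤ #R := by
    refine card_le_card fun l hl => ?_
    rw [hR, Finset.mem_filter, add_comm, mem_stab.1 (hL1 hl)]
    exact ⟨hL2 hl, hx₁⟩
  have lT' : #T' = 0 ∨ #L ≤ #T' := by
    rcases Finset.eq_empty_or_nonempty T' with h | ⟨t, ht⟩
    · left; simp [h]
    · right
      rw [hT', Finset.mem_filter] at ht
      refine card_le_card_of_injOn (fun l => l + t) ?_ (fun a _ b _ h => by simpa using h)
      intro l hl
      simp only [hT', Finset.mem_coe, Finset.mem_filter]
      rw [show x + (l + t) = l + (x + t) by abel, mem_stab.1 (hL2 hl)]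
      exact ⟨add_mem_stab (hL1 hl) ht.1, ht.2⟩
  have lR' : #R' = 0 ∨ #L ≤ #R' := by
    rcases Finset.eq_empty_or_nonempty R' with h | ⟨t, ht⟩
    · left; simp [h]
    · right
      rw [hR', Finset.mem_filter] at ht
      refine card_le_card_of_injOn (fun l => l + t) ?_ (fun a _ b _ h => by simpa using h)
      intro l hl
      simp only [hR', Finset.mem_coe, Finset.mem_filter]
      rw [show x + (l + t) = l + (x + t) by abel, mem_stab.1 (hL1 hl)]
      exact ⟨add_mem_stab (hL2 hl) ht.1, ht.2⟩
  have lpos : 0 < #L :=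
    Finset.card_pos.2 ⟨0, Finset.mem_inter.2 ⟨zero_mem_stab _, zero_mem_stab _⟩⟩
  rcases lR' with h0 | h0
  · -- here `R` is all of the stabilizer of `C₂`
    have h3 : #L * #R ≤ #L * #(C₂ \ C₁) := le_trans (Nat.mul_le_mul_right _ lT) e1
    have h4 := Nat.le_of_mul_le_mul_left h3 lpos
    omega
  · rcases lT' with h5 | h5
    · exfalso
      have h3 : #T * #L ≤ #L * #(C₂ \ C₁) := le_trans (Nat.mul_le_mul_left _ lR) e1
      rw [mul_comm] at h3
      have h4 := Nat.le_of_mul_le_mul_left h3 lpos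
      omega
    · exfalso
      zify at *
      nlinarith [mul_nonneg (sub_nonneg.2 lT) (sub_nonneg.2 lR),
        mul_nonneg (sub_nonneg.2 h5) (sub_nonneg.2 h0), mul_lt_mul_of_pos_left h₁ lpos,
        mul_lt_mul_of_pos_left h₂ lpos]

/-- Kneser's union lemma: `|C| + |stab C|` for a union is at least the smaller of its values on
the two parts. -/
lemma card_union {C₁ C₂ : Finset G} :
    #C₁ + #(stab C₁) ≤ #(C₁ ∪ C₂) + #(stab (C₁ ∪ C₂)) ∨
    #C₂ + #(stab C₂) ≤ #(C₁ ∪ C₂) + #(stab (C₁ ∪ C₂)) := by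
  by_cases s1 : C₂ ⊆ C₁
  · left; rw [Finset.union_eq_left.2 s1]
  by_cases s2 : C₁ ⊆ C₂
  · right; rw [Finset.union_eq_right.2 s2]
  obtain ⟨x, hx2, hx1⟩ := Finset.not_subset.1 s1
  obtain ⟨y, hy1, hy2⟩ := Finset.not_subset.1 s2
  by_contra! hcon
  obtain ⟨c1, c2⟩ := hcon
  have hL : #(stab C₁ ∩ stab C₂) ≤ #(stab (C₁ ∪ C₂)) := by
    refine card_le_card fun l hl => ?_
    rw [Finset.mem_inter, mem_stab, mem_stab] at hl
    rw [mem_stab]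
    intro x
    rw [Finset.mem_union, Finset.mem_union, hl.1, hl.2]
  have u1 : #(C₁ ∪ C₂) = #C₁ + #(C₂ \ C₁) := by
    rw [← Finset.card_union_of_disjoint Finset.disjoint_sdiff, Finset.union_sdiff_self_eq_union]
  have u2 : #(C₁ ∪ C₂) = #C₂ + #(C₁ \ C₂) := by
    rw [← Finset.card_union_of_disjoint Finset.disjoint_sdiff, Finset.union_sdiff_self_eq_union,
      Finset.union_comm]
  have h1 := card_stab_lt hx2 hx1 (by omega) (by omega)
  have h2 := card_stab_lt hy1 hy2 (by rw [Finset.inter_comm]; omega)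
    (by rw [Finset.inter_comm]; omega)
  omega

/-- The Dyson `e`-transform `(A, B) ↦ (A ∪ (B + e), B ∩ (A - e))` with `e ∈ A` preserves
`|A| + |B|`, shrinks the sumset and keeps `0` in both sets. Once it no longer shrinks `B`, the set
`B` consists of periods of `A`, and `C = A` works. -/
lemma exists_subset_zero (n : ℕ) : ∀ (A B : Finset G), #B = n → (0 : G) ∈ A → (0 : G) ∈ B →
    ∃ C ⊆ A + B, (0 : G) ∈ C ∧ #A + #B ≤ #C + #(stab C) := by
  induction n using Nat.strong_induction_on with
  | _ n ih =>
    intro A B hn hA hB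
    by_cases h : ∃ e ∈ A, ∃ b ∈ B, b + e ∉ A
    · obtain ⟨e, he, b, hb, hbe⟩ := h
      set B' := {x ∈ B | x + e ∈ A} with hB'
      set A' := A ∪ B.image (· + e) with hA'
      have hcard : #A' + #B' = #A + #B := by
        have h1 : #(A ∪ B.image (· + e)) + #(A ∩ B.image (· + e)) = #A + #(B.image (· + e)) :=
          Finset.card_union_add_card_inter _ _
        have h2 : #(B.image (· + e)) = #B := card_image_of_injective _ (add_left_injective e)
        have h3 : A ∩ B.image (· + e) = B'.image (· + e) := by
          ext z
          simp only [Finset.mem_inter, Finset.mem_image, hB', Finset.mem_filter]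
          constructor
          · rintro ⟨hz, w, hw, rfl⟩; exact ⟨w, ⟨hw, hz⟩, rfl⟩
          · rintro ⟨w, ⟨hw, hz⟩, rfl⟩; exact ⟨hz, w, hw, rfl⟩
        have h4 : #(B'.image (· + e)) = #B' := card_image_of_injective _ (add_left_injective e)
        rw [h3, h4, h2] at h1
        exact h1
      have hlt : #B' < n := by
        rw [← hn]
        refine Finset.card_lt_card ⟨Finset.filter_subset _ _, fun hs => ?_⟩
        exact hbe (Finset.mem_filter.1 (hs hb)).2
      obtain ⟨C, hC, h0, hle⟩ := ih _ hlt A' B' rfl (Finset.mem_union_left _ hA)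
        (by simp [hB', hB, he])
      refine ⟨C, hC.trans ?_, h0, by omega⟩
      intro z hz
      obtain ⟨x, hx, y, hy, rfl⟩ := Finset.mem_add.1 hz
      rw [hB', Finset.mem_filter] at hy
      rcases Finset.mem_union.1 hx with hx | hx
      · exact Finset.add_mem_add hx hy.1
      · obtain ⟨w, hw, rfl⟩ := Finset.mem_image.1 hx
        rw [show w + e + y = (y + e) + w by abel]
        exact Finset.add_mem_add hy.2 hw
    · push Not at h
      refine ⟨A, fun a ha => ?_, hA, ?_⟩
      · simpa using Finset.add_mem_add ha hB
      · have : B ⊆ stab A := by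
          intro b hb
          have hinj : A.image (b + ·) = A := by
            refine Finset.eq_of_subset_of_card_le ?_ ?_
            · intro z hz
              obtain ⟨w, hw, rfl⟩ := Finset.mem_image.1 hz
              exact h w hw b hb
            · rw [card_image_of_injective _ (add_right_injective b)]
          rw [mem_stab]
          intro x
          constructor
          · intro hx
            rw [← hinj, Finset.mem_image] at hx
            obtain ⟨w, hw, hwx⟩ := hx
            rwa [← add_left_cancel hwx]
          · intro hx; exact h x hx b hb
        have := card_le_card this
        omega

lemma stab_image_add (C : Finset G) (c : G) : stab (C.image (· + c)) = stab C := by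
  ext g
  rw [mem_stab, mem_stab]
  have : ∀ y, y ∈ C.image (· + c) ↔ y - c ∈ C := by
    intro y
    rw [Finset.mem_image]
    constructor
    · rintro ⟨w, hw, rfl⟩; simpa
    · intro hy; exact ⟨_, hy, by simp⟩
  simp only [this]
  constructor
  · intro h x; simpa [← add_assoc] using h (x + c)
  · intro h x; simpa [add_sub_assoc] using h (x - c)

/-- Every sum `a + b` lies in a subset `C` of `A + B` satisfying Kneser's bound. -/
lemma exists_subset (A B : Finset G) {a b : G} (ha : a ∈ A) (hb : b ∈ B) :
    ∃ C ⊆ A + B, a + b ∈ C ∧ #A + #B ≤ #C + #(stab C) := by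
  obtain ⟨C, hC, h0, hle⟩ := exists_subset_zero _ (A.image (· + -a)) (B.image (· + -b)) rfl
    (by simp [ha]) (by simp [hb])
  rw [card_image_of_injective _ (add_left_injective _),
    card_image_of_injective _ (add_left_injective _)] at hle
  refine ⟨C.image (· + (a + b)), ?_, ?_, ?_⟩
  · intro z hz
    obtain ⟨c, hc, rfl⟩ := Finset.mem_image.1 hz
    obtain ⟨x, hx, y, hy, rfl⟩ := Finset.mem_add.1 (hC hc)
    obtain ⟨x, hx', rfl⟩ := Finset.mem_image.1 hx
    obtain ⟨y, hy', rfl⟩ := Finset.mem_image.1 hy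
    rw [show x + -a + (y + -b) + (a + b) = x + y by abel]
    exact Finset.add_mem_add hx' hy'
  · exact Finset.mem_image.2 ⟨0, h0, by simp⟩
  · rw [stab_image_add, card_image_of_injective _ (add_left_injective _)]
    exact hle

/-- The weak form of Kneser's theorem. -/
lemma kneser_weak (A B : Finset G) (hA : A.Nonempty) (hB : B.Nonempty) :
    #A + #B ≤ #(A + B) + #(stab (A + B)) := by
  have key : ∀ S : Finset G, S.Nonempty → S ⊆ A + B →
      ∃ C, S ⊆ C ∧ C ⊆ A + B ∧ #A + #B ≤ #C + #(stab C) := by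
    intro S hS
    induction hS using Finset.Nonempty.cons_induction with
    | singleton s =>
      intro hs
      obtain ⟨x, hx, y, hy, rfl⟩ := Finset.mem_add.1 (hs (Finset.mem_singleton_self s))
      obtain ⟨C, h1, h2, h3⟩ := exists_subset A B hx hy
      exact ⟨C, by simpa using h2, h1, h3⟩
    | cons s S hsS hS ih =>
      intro hs
      rw [Finset.cons_subset] at hs
      obtain ⟨C, h1, h2, h3⟩ := ih hs.2
      obtain ⟨x, hx, y, hy, rfl⟩ := Finset.mem_add.1 hs.1
      obtain ⟨D, h4, h5, h6⟩ := exists_subset A B hx hy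
      refine ⟨D ∪ C, ?_, Finset.union_subset h4 h2, ?_⟩
      · rw [Finset.cons_subset]
        exact ⟨Finset.mem_union_left _ h5, h1.trans Finset.subset_union_right⟩
      · rcases card_union (C₁ := D) (C₂ := C) with h | h <;> omega
  obtain ⟨C, h1, h2, h3⟩ := key (A + B) (hA.add hB) subset_rfl
  rwa [Finset.Subset.antisymm h2 h1] at h3

/-- Kneser's theorem for doubling: with `H` the stabilizer of `2X`, one has
`|2X| ≥ 2|X + H| - |H|`. -/
lemma kneser (X : Finset G) (hX : X.Nonempty) :
    2 * #(X + stab (X + X)) ≤ #(X + X) + #(stab (X + X)) := by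
  have : (X + stab (X + X)) + (X + stab (X + X)) = X + X := by
    ext z
    constructor
    · intro hz
      obtain ⟨u, hu, v, hv, rfl⟩ := Finset.mem_add.1 hz
      obtain ⟨x, hx, g, hg, rfl⟩ := Finset.mem_add.1 hu
      obtain ⟨y, hy, h, hh, rfl⟩ := Finset.mem_add.1 hv
      rw [show x + g + (y + h) = g + (h + (x + y)) by abel, mem_stab.1 hg, mem_stab.1 hh]
      exact Finset.add_mem_add hx hy
    · intro hz
      obtain ⟨x, hx, y, hy, rfl⟩ := Finset.mem_add.1 hz
      refine Finset.add_mem_add ?_ ?_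
      · simpa using Finset.add_mem_add hx (zero_mem_stab (X + X))
      · simpa using Finset.add_mem_add hy (zero_mem_stab (X + X))
  have hne : (X + stab (X + X)).Nonempty := hX.add ⟨0, zero_mem_stab _⟩
  have h := kneser_weak _ _ hne hne
  rw [this] at h
  omega

end Kneser

/-! ### Freiman's `3k - 4` theorem in the integers -/

section Freiman

open Kneser

/-- If `0, a ∈ A ⊆ [0, a]` and `X` is the reduction of `A` modulo `a`, then every set of residues
between `X` and `2X` is hit by at least `|Q| + |A|` elements of `2A`: the `|A|` elements of `a + A`
reduce into `X`, and every element of `Q` is still hit after these are removed from `2A`. -/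
lemma card_add_card_le_fiber {A : Finset ℤ} {N : ℕ} (h0 : (0 : ℤ) ∈ A) (ha : (N : ℤ) ∈ A)
    (hN : 0 < N) (hsub : A ⊆ Icc 0 (N : ℤ)) {Q : Finset (ZMod N)}
    (hX : A.image (Int.cast : ℤ → ZMod N) ⊆ Q)
    (hQ : Q ⊆ A.image (Int.cast : ℤ → ZMod N) + A.image (Int.cast : ℤ → ZMod N)) :
    #Q + #A ≤ #{s ∈ A + A | ((s : ℤ) : ZMod N) ∈ Q} := by
  set π : ℤ → ZMod N := Int.cast with hπ
  set F := {s ∈ A + A | π s ∈ Q} with hF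
  set D := A.image ((N : ℤ) + ·) with hD
  have hDF : D ⊆ F := by
    intro s hs
    obtain ⟨x, hx, rfl⟩ := Finset.mem_image.1 hs
    rw [hF, Finset.mem_filter]
    refine ⟨Finset.add_mem_add ha hx, hX ?_⟩
    exact Finset.mem_image.2 ⟨x, hx, by simp [hπ]⟩
  have hDc : #D = #A := card_image_of_injective _ (add_right_injective _)
  have hQF : Q ⊆ (F \ D).image π := by
    intro q hq
    rw [Finset.mem_image]
    by_cases hqX : q ∈ A.image π
    · obtain ⟨x, hx, rfl⟩ := Finset.mem_image.1 hqX
      have hxI := Finset.mem_Icc.1 (hsub hx)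
      rcases eq_or_lt_of_le hxI.2 with hxN | hxN
      · refine ⟨0, ?_, by simp [hπ, hxN]⟩
        rw [Finset.mem_sdiff, hF, Finset.mem_filter]
        refine ⟨⟨by simpa using Finset.add_mem_add h0 h0, by
          simpa [hπ, hxN] using hq⟩, fun h => ?_⟩
        obtain ⟨y, hy, h⟩ := Finset.mem_image.1 h
        have hyI := Finset.mem_Icc.1 (hsub hy)
        omega
      · refine ⟨x, ?_, rfl⟩
        rw [Finset.mem_sdiff, hF, Finset.mem_filter]
        refine ⟨⟨by simpa using Finset.add_mem_add hx h0, hq⟩, fun h => ?_⟩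
        obtain ⟨y, hy, h⟩ := Finset.mem_image.1 h
        have hyI := Finset.mem_Icc.1 (hsub hy)
        omega
    · obtain ⟨u, hu, v, hv, huv⟩ := Finset.mem_add.1 (hQ hq)
      obtain ⟨x, hx, rfl⟩ := Finset.mem_image.1 hu
      obtain ⟨y, hy, rfl⟩ := Finset.mem_image.1 hv
      have hxy : π (x + y) = q := by rw [← huv]; simp [hπ]
      refine ⟨x + y, ?_, hxy⟩
      rw [Finset.mem_sdiff, hF, Finset.mem_filter]
      refine ⟨⟨Finset.add_mem_add hx hy, hxy ▸ hq⟩, fun h => hqX ?_⟩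
      obtain ⟨w, hw, h⟩ := Finset.mem_image.1 h
      rw [← hxy, ← h]
      exact Finset.mem_image.2 ⟨w, hw, by simp [hπ]⟩
  have h1 := (card_le_card hQF).trans card_image_le
  rw [card_sdiff_of_subset hDF, hDc] at h1
  have h2 := card_le_card hDF
  omega

/-- If the reduction of `A` misses at most `m` residues of `K`, then at least `|K| - m` elements
of `A` reduce into `K`. -/
lemma card_fiber_ge {A : Finset ℤ} {N : ℕ} {X K : Finset (ZMod N)} {m : ℕ}
    (hX : A.image (Int.cast : ℤ → ZMod N) = X) (hK : #K ≤ #(X ∩ K) + m) :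
    #K ≤ #{x ∈ A | ((x : ℤ) : ZMod N) ∈ K} + m := by
  refine hK.trans (Nat.add_le_add_right ?_ m)
  refine (card_le_card (t := ({x ∈ A | ((x : ℤ) : ZMod N) ∈ K}).image Int.cast) ?_).trans
    card_image_le
  intro q hq
  rw [Finset.mem_inter, ← hX] at hq
  obtain ⟨x, hx, rfl⟩ := Finset.mem_image.1 hq.1
  exact Finset.mem_image.2 ⟨x, Finset.mem_filter.2 ⟨hx, hq.2⟩, rfl⟩

/-- Freiman's `3k - 4` theorem for a set normalized to have minimum `0` and gcd `1`. -/
theorem freiman_normalized {A : Finset ℤ} {a : ℤ} (h0 : (0 : ℤ) ∈ A) (ha : a ∈ A)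
    (hsub : A ⊆ Icc 0 a) (hcl : AddSubgroup.closure (A : Set ℤ) = ⊤)
    (hsmall : #(A + A) + 4 ≤ 3 * #A) : a + #A ≤ #(A + A) := by
  have ha0 : 0 < a := by
    rcases eq_or_lt_of_le (Finset.mem_Icc.1 (hsub ha)).1 with h | h
    · exfalso
      subst h
      have hA : (A : Set ℤ) ⊆ {0} := by
        intro x hx
        have := Finset.mem_Icc.1 (hsub hx)
        simp only [Set.mem_singleton_iff]; omega
      have h1 := AddSubgroup.closure_mono hA
      rw [hcl, AddSubgroup.closure_singleton_zero] at h1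
      have h2 : (1 : ℤ) ∈ (⊥ : AddSubgroup ℤ) := h1 (AddSubgroup.mem_top _)
      simp at h2
    · exact h
  obtain ⟨N, rfl⟩ : ∃ N : ℕ, a = N := ⟨a.toNat, by omega⟩
  have hN : 0 < N := by exact_mod_cast ha0
  have : NeZero N := ⟨hN.ne'⟩
  set π : ℤ → ZMod N := Int.cast with hπ
  set X := A.image π with hX
  have h0X : (0 : ZMod N) ∈ X := Finset.mem_image.2 ⟨0, h0, by simp [hπ]⟩
  have hX2 : X ⊆ X + X := fun x hx => by simpa using Finset.add_mem_add hx h0X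
  have hXc : #A ≤ #X + 1 := by
    have h1 : #((A.erase (N : ℤ)).image π) = #(A.erase (N : ℤ)) := by
      refine card_image_of_injOn fun x hx y hy hxy => ?_
      simp only [Finset.coe_erase, Set.mem_sdiff, Finset.mem_coe, Set.mem_singleton_iff] at hx hy
      have hx' := Finset.mem_Icc.1 (hsub hx.1)
      have hy' := Finset.mem_Icc.1 (hsub hy.1)
      simp only [hπ, ZMod.intCast_eq_intCast_iff'] at hxy
      rwa [Int.emod_eq_of_lt hx'.1 (lt_of_le_of_ne hx'.2 hx.2),
        Int.emod_eq_of_lt hy'.1 (lt_of_le_of_ne hy'.2 hy.2)] at hxy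
    have h2 := card_le_card (Finset.image_subset_image (f := π) (Finset.erase_subset (N : ℤ) A))
    rw [← hX] at h2
    have h3 := Finset.card_erase_add_one ha
    omega
  set H := stab (X + X) with hH
  by_cases htop : ∀ g, g ∈ H
  · -- `2X` is periodic under everything, hence all of `ZMod N`
    have huniv : X + X = Finset.univ := by
      refine Finset.eq_univ_iff_forall.2 fun g => ?_
      have := (mem_stab.1 (htop g) 0).2 (hX2 h0X)
      simpa using this
    have h1 := card_add_card_le_fiber h0 ha hN hsub (Q := Finset.univ) (Finset.subset_univ _)
      (by rw [← hπ, ← hX, huniv])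
    simp only [Finset.mem_univ, Finset.filter_true, Finset.card_univ, ZMod.card] at h1
    exact_mod_cast h1
  exfalso
  set Y := X + H with hY
  have hXY : X ⊆ Y := fun x hx => by
    simpa using Finset.add_mem_add hx (zero_mem_stab (X + X))
  have hkn : 2 * #Y ≤ #(X + X) + #H := kneser X ⟨0, h0X⟩
  have hHpos : 0 < #H := Finset.card_pos.2 ⟨0, zero_mem_stab _⟩
  -- `X` generates, so it is not contained in `H`
  obtain ⟨x₁, hx₁X, hx₁H⟩ : ∃ x ∈ X, x ∉ H := by
    by_contra! hcon
    let K : AddSubgroup (ZMod N) :=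
      { carrier := {g | g ∈ H}
        add_mem' := fun ha hb => add_mem_stab ha hb
        zero_mem' := zero_mem_stab _
        neg_mem' := fun ha => neg_mem_stab ha }
    have h1 : AddSubgroup.closure (A : Set ℤ) ≤ K.comap (Int.castAddHom (ZMod N)) := by
      rw [AddSubgroup.closure_le]
      intro x hx
      exact hcon _ (Finset.mem_image_of_mem π hx)
    rw [hcl] at h1
    refine htop fun g => ?_
    obtain ⟨z, rfl⟩ := ZMod.intCast_surjective g
    exact h1 (AddSubgroup.mem_top z)
  have hcos : ∀ z : ZMod N, #(H.image (z + ·)) = #H := fun z =>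
    card_image_of_injective _ (add_right_injective z)
  have hcosY : ∀ x ∈ X, H.image (x + ·) ⊆ Y := by
    intro x hx w hw
    obtain ⟨h, hh, rfl⟩ := Finset.mem_image.1 hw
    exact Finset.add_mem_add hx hh
  have hY2 : 2 * #H ≤ #Y := by
    have hdis : Disjoint (H.image ((0 : ZMod N) + ·)) (H.image (x₁ + ·)) := by
      rw [Finset.disjoint_left]
      intro w hw hw'
      obtain ⟨h, hh, rfl⟩ := Finset.mem_image.1 hw
      obtain ⟨h', hh', he⟩ := Finset.mem_image.1 hw'
      apply hx₁H
      have : x₁ = h - h' := by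
        simp only [zero_add] at he
        rw [← he]; abel
      rw [this]
      exact sub_mem_stab hh hh'
    have h1 := card_le_card (Finset.union_subset (hcosY 0 h0X) (hcosY x₁ hx₁X))
    rw [Finset.card_union_of_disjoint hdis, hcos, hcos] at h1
    omega
  obtain ⟨z, hz, hzY⟩ : ∃ z ∈ X + X, z ∉ Y := by
    by_contra! hcon
    have := card_le_card (show X + X ⊆ Y from hcon)
    omega
  obtain ⟨α, hα, β, hβ, rfl⟩ := Finset.mem_add.1 hz
  set Z := H.image (α + β + ·) with hZ
  have hZX : Disjoint X Z := by
    rw [Finset.disjoint_left]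
    intro w hw hw'
    obtain ⟨h, hh, he⟩ := Finset.mem_image.1 hw'
    apply hzY
    have : α + β = w + -h := by rw [← he]; abel
    rw [this]
    exact Finset.add_mem_add hw (neg_mem_stab hh)
  set Q := (X + X) \ Z with hQ
  have hQc : #(X + X) ≤ #Q + #H := by
    have := Finset.le_card_sdiff Z (X + X)
    rw [hcos, ← hQ] at this
    omega
  have hXQ : X ⊆ Q := fun x hx =>
    Finset.mem_sdiff.2 ⟨hX2 hx, Finset.disjoint_left.1 hZX hx⟩
  have hout : #Q + #A ≤ #{s ∈ A + A | π s ∈ Q} :=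
    card_add_card_le_fiber h0 ha hN hsub hXQ Finset.sdiff_subset
  have hfib : ∀ x ∈ X, #H ≤ #{y ∈ A | π y ∈ H.image (x + ·)} + #(Y \ X) := by
    intro x hx
    rw [← hcos x]
    refine card_fiber_ge rfl ?_
    rw [← Finset.card_inter_add_card_sdiff (H.image (x + ·)) X, Finset.inter_comm]
    exact Nat.add_le_add_left (card_le_card (Finset.sdiff_subset_sdiff (hcosY x hx) subset_rfl)) _
  have hYX : #(Y \ X) + #X = #Y := Finset.card_sdiff_add_card_eq_card hXY
  set Aα := {y ∈ A | π y ∈ H.image (α + ·)} with hAα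
  set Aβ := {y ∈ A | π y ∈ H.image (β + ·)} with hAβ
  have hne : ∀ x ∈ X, ({y ∈ A | π y ∈ H.image (x + ·)}).Nonempty := by
    intro x hx
    obtain ⟨y, hy, rfl⟩ := Finset.mem_image.1 hx
    exact ⟨y, Finset.mem_filter.2 ⟨hy, Finset.mem_image.2 ⟨0, zero_mem_stab _, by simp⟩⟩⟩
  have hcd : #Aα + #Aβ - 1 ≤ #(Aα + Aβ) :=
    cauchy_davenport_add_of_linearOrder_isCancelAdd (hne α hα) (hne β hβ)
  have hin : Aα + Aβ ⊆ {s ∈ A + A | ¬ π s ∈ Q} := by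
    intro s hs
    obtain ⟨x, hx, y, hy, rfl⟩ := Finset.mem_add.1 hs
    rw [hAα, Finset.mem_filter] at hx
    rw [hAβ, Finset.mem_filter] at hy
    rw [Finset.mem_filter]
    refine ⟨Finset.add_mem_add hx.1 hy.1, fun h => (Finset.mem_sdiff.1 h).2 ?_⟩
    obtain ⟨h, hh, he⟩ := Finset.mem_image.1 hx.2
    obtain ⟨h', hh', he'⟩ := Finset.mem_image.1 hy.2
    refine Finset.mem_image.2 ⟨h + h', add_mem_stab hh hh', ?_⟩
    have : π (x + y) = π x + π y := by simp [hπ]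
    rw [this, ← he, ← he']
    abel
  have hin' := card_le_card hin
  have htot : #{s ∈ A + A | π s ∈ Q} + #{s ∈ A + A | ¬ π s ∈ Q} = #(A + A) :=
    Finset.card_filter_add_card_filter_not _
  have f1 : #H ≤ #Aα + #(Y \ X) := hfib α hα
  have f2 : #H ≤ #Aβ + #(Y \ X) := hfib β hβ
  omega

end Freiman

/-! ### A long interval in a sumset of dense sets of integers -/

section Interval

/-- Pigeonhole: if `t ∉ A + B` then `A` and `t - B` are disjoint inside `[x, y]`. -/
lemma pigeonhole {A B : Finset ℤ} {t x y : ℤ} (ht : t ∉ A + B) (hxy : x ≤ y + 1) :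
    (#(A ∩ Icc x y) : ℤ) + #(B ∩ Icc (t - y) (t - x)) ≤ y - x + 1 := by
  have h1 : #((B ∩ Icc (t - y) (t - x)).image (t - ·)) = #(B ∩ Icc (t - y) (t - x)) :=
    card_image_of_injective _ (sub_right_injective)
  have hdis : Disjoint (A ∩ Icc x y) ((B ∩ Icc (t - y) (t - x)).image (t - ·)) := by
    rw [Finset.disjoint_left]
    intro z hz hz'
    obtain ⟨w, hw, rfl⟩ := Finset.mem_image.1 hz'
    apply ht
    have := Finset.add_mem_add (Finset.mem_inter.1 hz).1 (Finset.mem_inter.1 hw).1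
    simpa using this
  have hsub : (A ∩ Icc x y) ∪ ((B ∩ Icc (t - y) (t - x)).image (t - ·)) ⊆ Icc x y := by
    intro z hz
    rcases Finset.mem_union.1 hz with hz | hz
    · exact (Finset.mem_inter.1 hz).2
    · obtain ⟨w, hw, rfl⟩ := Finset.mem_image.1 hz
      have := Finset.mem_Icc.1 (Finset.mem_inter.1 hw).2
      rw [Finset.mem_Icc]; omega
  have h2 := card_le_card hsub
  rw [Finset.card_union_of_disjoint hdis, h1, Int.card_Icc] at h2
  omega

lemma card_inter_Icc_mono {A : Finset ℤ} {x y x' y' : ℤ}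
    (h : ∀ z ∈ A, x ≤ z → z ≤ y → x' ≤ z ∧ z ≤ y') :
    #(A ∩ Icc x y) ≤ #(A ∩ Icc x' y') := by
  refine card_le_card fun z hz => ?_
  rw [Finset.mem_inter, Finset.mem_Icc] at hz ⊢
  exact ⟨hz.1, h z hz.1 hz.2.1 hz.2.2⟩

/-- Two intervals covering `A`. -/
lemma card_le_two {A : Finset ℤ} {x y x' y' : ℤ}
    (h : ∀ z ∈ A, (x ≤ z ∧ z ≤ y) ∨ (x' ≤ z ∧ z ≤ y')) :
    #A ≤ #(A ∩ Icc x y) + #(A ∩ Icc x' y') := by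
  refine (card_le_card fun z hz => ?_).trans (Finset.card_union_le _ _)
  rw [Finset.mem_union, Finset.mem_inter, Finset.mem_inter, Finset.mem_Icc, Finset.mem_Icc]
  rcases h z hz with h | h
  · exact Or.inl ⟨hz, h⟩
  · exact Or.inr ⟨hz, h⟩

/-- Two intervals covering `A`, with the points of a third interval counted twice. -/
lemma card_add_le_two {A : Finset ℤ} {x y x' y' : ℤ}
    (h : ∀ z ∈ A, (x ≤ z ∧ z ≤ y) ∨ (x' ≤ z ∧ z ≤ y')) :
    #A + #(A ∩ Icc (max x x') (min y y')) ≤ #(A ∩ Icc x y) + #(A ∩ Icc x' y') := by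
  rw [← Finset.card_union_add_card_inter (A ∩ Icc x y)]
  refine Nat.add_le_add (card_le_card fun z hz => ?_) (card_le_card fun z hz => ?_)
  · rw [Finset.mem_union, Finset.mem_inter, Finset.mem_inter, Finset.mem_Icc, Finset.mem_Icc]
    rcases h z hz with h | h
    · exact Or.inl ⟨hz, h⟩
    · exact Or.inr ⟨hz, h⟩
  · rw [Finset.mem_inter, Finset.mem_Icc, max_le_iff, le_min_iff] at hz
    simp only [Finset.mem_inter, Finset.mem_Icc]
    exact ⟨⟨hz.1, hz.2.1.1, hz.2.2.1⟩, ⟨hz.1, hz.2.1.2, hz.2.2.2⟩⟩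

/-- Points of `A` outside two intervals lie in the gap between them. -/
lemma card_le_two_add_gap {A : Finset ℤ} {x y x' y' : ℤ} (hg : y < x')
    (h : ∀ z ∈ A, x ≤ z ∧ z ≤ y') :
    (#A : ℤ) ≤ #(A ∩ Icc x y) + #(A ∩ Icc x' y') + (x' - y - 1) := by
  have h1 : A ⊆ ((A ∩ Icc x y) ∪ (A ∩ Icc x' y')) ∪ Icc (y + 1) (x' - 1) := by
    intro z hz
    have := h z hz
    simp only [Finset.mem_union, Finset.mem_inter, Finset.mem_Icc, hz, true_and]
    omega
  have h2 := (card_le_card h1).trans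
    ((Finset.card_union_le _ _).trans (Nat.add_le_add_right (Finset.card_union_le _ _) _))
  rw [Int.card_Icc] at h2
  omega

/-- The sumset of two dense sets of integers with small sumset contains a long interval.

A missing sum `t` lies in `U` (below `b`) or in `a + V` (above `a`), where `U` and `V` are disjoint
sets of holes of `B`. If all of `U` lies below all of `V`, counting holes gives the interval
between `max U` and `a + min V`. Otherwise there are adjacent elements `w < x` with
`w ∈ V` and `x ∈ U`, between which `B` has many holes that belong neither to `U` nor to `V`; this
makes `A + B` too large. -/
theorem exists_Icc_subset_add {A B : Finset ℤ} {a b : ℤ} (hA0 : (0 : ℤ) ∈ A) (hAa : a ∈ A)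
    (hA : A ⊆ Icc 0 a) (hB0 : (0 : ℤ) ∈ B) (hBb : b ∈ B) (hB : B ⊆ Icc 0 b) (hba : b ≤ a)
    (hd : a + 3 ≤ (#A : ℤ) + #B) (hs : (#(A + B) : ℤ) + 4 ≤ #A + 2 * #B) :
    ∃ u v : ℤ, Icc u v ⊆ A + B ∧ (#A : ℤ) + #B ≤ v - u + 2 := by
  have hA' : ∀ z ∈ A, 0 ≤ z ∧ z ≤ a := fun z hz => Finset.mem_Icc.1 (hA hz)
  have hB' : ∀ z ∈ B, 0 ≤ z ∧ z ≤ b := fun z hz => Finset.mem_Icc.1 (hB hz)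
  have hb0 := (hB' _ hBb).1
  have cA : A ∩ Icc 0 a = A := Finset.inter_eq_left.2 hA
  have mid : ∀ t, b ≤ t → t ≤ a → t ∈ A + B := by
    intro t h1 h2
    by_contra ht
    have h3 := pigeonhole (x := 0) (y := a) ht (by omega)
    have h4 : B ∩ Icc (t - a) (t - 0) = B := by
      refine Finset.inter_eq_left.2 fun z hz => ?_
      have := hB' z hz
      rw [Finset.mem_Icc]; omega
    rw [cA, h4] at h3
    omega
  set U := {t ∈ Icc 1 (b - 1) | t ∉ A + B} with hU
  set V := {t ∈ Icc 1 (b - 1) | t + a ∉ A + B} with hV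
  have mU : ∀ t, t ∈ U ↔ (1 ≤ t ∧ t ≤ b - 1) ∧ t ∉ A + B := by
    intro t; rw [hU, Finset.mem_filter, Finset.mem_Icc]
  have mV : ∀ t, t ∈ V ↔ (1 ≤ t ∧ t ≤ b - 1) ∧ t + a ∉ A + B := by
    intro t; rw [hV, Finset.mem_filter, Finset.mem_Icc]
  have hUB : ∀ t ∈ U, t ∉ B := fun t ht hB => ((mU t).1 ht).2
    (by simpa using Finset.add_mem_add hA0 hB)
  have hVB : ∀ t ∈ V, t ∉ B := fun t ht hB => ((mV t).1 ht).2
    (by simpa [add_comm] using Finset.add_mem_add hAa hB)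
  have hUV : Disjoint U V := by
    rw [Finset.disjoint_left]
    intro t hu hv
    obtain ⟨⟨h1, h2⟩, hu⟩ := (mU t).1 hu
    obtain ⟨_, hv⟩ := (mV t).1 hv
    have h3 := pigeonhole (x := 0) (y := t) hu (by omega)
    have h4 := pigeonhole (x := t) (y := a) hv (by omega)
    have h5 : #A ≤ _ := card_le_two (A := A) (x := 0) (y := t) (x' := t) (y' := a)
      (fun z hz => by have := hA' z hz; omega)
    have h6 : #B ≤ _ := card_le_two (A := B) (x := t - t) (y := t - 0) (x' := t + a - a)
      (y' := t + a - t) (fun z hz => by have := hB' z hz; omega)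
    omega
  -- the bound at a missing small sum, and at a missing large one
  have bU : ∀ x ∈ U, (#(A ∩ Icc 0 x) : ℤ) + #(B ∩ Icc 0 x) ≤ x + 1 := by
    intro x hx
    obtain ⟨⟨h1, h2⟩, hx⟩ := (mU x).1 hx
    have h3 := pigeonhole (x := 0) (y := x) hx (by omega)
    rw [sub_self, sub_zero] at h3
    omega
  have bV : ∀ w ∈ V, (#(A ∩ Icc (w + a - b) a) : ℤ) + #(B ∩ Icc w b) ≤ b - w + 1 := by
    intro w hw
    obtain ⟨⟨h1, h2⟩, hw⟩ := (mV w).1 hw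
    have h3 := pigeonhole (x := w + a - b) (y := a) hw (by omega)
    rw [show w + a - a = w by ring, show w + a - (w + a - b) = b by ring] at h3
    omega
  have nobad : ∀ x ∈ U, ∀ w ∈ V, x < w := by
    by_contra! hcon
    obtain ⟨x₀, hx₀, w₀, hw₀, hwx₀⟩ := hcon
    have hne : ({z ∈ U ×ˢ V | z.2 ≤ z.1}).Nonempty :=
      ⟨(x₀, w₀), by simp [hx₀, hw₀, hwx₀]⟩
    obtain ⟨⟨x, w⟩, hmem, hmin⟩ := Finset.exists_min_image _ (fun z => z.1 - z.2) hne
    simp only [Finset.mem_filter, Finset.mem_product, and_imp, Prod.forall] at hmem hmin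
    obtain ⟨⟨hx, hw⟩, hwx⟩ := hmem
    have hne : x ≠ w := fun h => Finset.disjoint_left.1 hUV hx (h ▸ hw)
    have hxI := ((mU x).1 hx).1
    have hwI := ((mV w).1 hw).1
    have h1 := bU x hx
    have h2 := bV w hw
    have h3 := card_add_le_two (A := B) (x := 0) (y := x) (x' := w) (y' := b)
      (fun z hz => by have := hB' z hz; omega)
    rw [max_eq_right (by omega), min_eq_left (by omega)] at h3
    rcases le_or_gt (w + a - b) (x + 1) with h4 | h4
    · have h5 := card_le_two (A := A) (x := 0) (y := x) (x' := w + a - b) (y' := a)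
        (fun z hz => by have := hA' z hz; omega)
      -- the holes of `B` in `[w, x]`
      set E := Icc w x \ B with hE
      have cE : (#E : ℤ) + #(B ∩ Icc w x) = x - w + 1 := by
        have := Finset.card_sdiff_add_card_inter (Icc w x) B
        rw [Int.card_Icc, Finset.inter_comm, ← hE] at this
        omega
      have hsub : (U ∪ V) ∪ E ⊆ Icc 0 b \ B := by
        intro z hz
        rw [Finset.mem_sdiff, Finset.mem_Icc]
        simp only [Finset.mem_union] at hz
        rcases hz with (hz | hz) | hz
        · have := ((mU z).1 hz).1
          exact ⟨by omega, hUB z hz⟩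
        · have := ((mV z).1 hz).1
          exact ⟨by omega, hVB z hz⟩
        · rw [hE, Finset.mem_sdiff, Finset.mem_Icc] at hz
          exact ⟨by omega, hz.2⟩
      have hint : (U ∪ V) ∩ E ⊆ {w, x} := by
        intro z hz
        rw [Finset.mem_inter, Finset.mem_union, hE, Finset.mem_sdiff, Finset.mem_Icc] at hz
        rw [Finset.mem_insert, Finset.mem_singleton]
        obtain ⟨hz, hz', -⟩ := hz
        by_contra! hcon
        rcases hz with hz | hz
        · have := hmin z w hz hw (by omega); omega
        · have := hmin x z hx hz (by omega); omega
      have c1 := Finset.card_union_add_card_inter (U ∪ V) E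
      have c2 := card_le_card hsub
      have c3 := (card_le_card hint).trans Finset.card_le_two
      rw [Finset.card_sdiff_of_subset hB, Int.card_Icc] at c2
      have c4 := card_le_card hB
      rw [Int.card_Icc] at c4
      have c5 := Finset.card_union_of_disjoint hUV
      have hbig : Icc 0 (a + b) ⊆ ((A + B) ∪ U) ∪ V.image (· + a) := by
        intro t ht
        rw [Finset.mem_Icc] at ht
        simp only [Finset.mem_union, Finset.mem_image]
        by_cases htm : t ∈ A + B
        · exact Or.inl (Or.inl htm)
        have ht0 : t ≠ 0 := by
          rintro rfl; exact htm (by simpa using Finset.add_mem_add hA0 hB0)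
        have htab : t ≠ a + b := by
          rintro rfl; exact htm (Finset.add_mem_add hAa hBb)
        by_cases h6 : t < b
        · exact Or.inl (Or.inr ((mU t).2 ⟨by omega, htm⟩))
        · refine Or.inr ⟨t - a, (mV _).2 ⟨?_, by simpa using htm⟩, by ring⟩
          have : a < t := by
            by_contra! h7
            exact htm (mid t (by omega) h7)
          omega
      have c6 := card_le_card hbig
      have c7 := Finset.card_union_le ((A + B) ∪ U) (V.image (· + a))
      have c8 := Finset.card_union_le (A + B) U
      have c9 := Finset.card_image_le (s := V) (f := (· + a))
      rw [Int.card_Icc] at c6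
      omega
    · have h5 := card_le_two (A := A) (x := 0) (y := x) (x' := x + 1) (y' := a)
        (fun z hz => by have := hA' z hz; omega)
      have h6 := pigeonhole (x := x + 1) (y := a) ((mV w).1 hw).2 (by omega)
      have h7 := card_inter_Icc_mono (A := B) (x := w) (y := b) (x' := w + a - a)
        (y' := w + a - (x + 1)) (fun z _ _ _ => by omega)
      omega
  obtain ⟨X, hX1, hX2, hXU, hXb, hXV⟩ : ∃ X : ℤ, -1 ≤ X ∧ X ≤ b - 1 ∧ (∀ x ∈ U, x ≤ X) ∧
      (#(A ∩ Icc 0 X) : ℤ) + #(B ∩ Icc 0 X) ≤ X + 1 ∧ ∀ w ∈ V, X < w := by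
    rcases U.eq_empty_or_nonempty with h | h
    · refine ⟨-1, le_rfl, by omega, by simp [h], by simp, fun w hw => ?_⟩
      have := ((mV w).1 hw).1; omega
    · have hm := Finset.max'_mem U h
      have := ((mU _).1 hm).1
      exact ⟨U.max' h, by omega, by omega, fun x hx => Finset.le_max' _ _ hx, bU _ hm,
        fun w hw => nobad _ hm w hw⟩
  obtain ⟨W, hW1, hW2, hWV, hWb⟩ : ∃ W : ℤ, X < W ∧ W ≤ b + 1 ∧ (∀ w ∈ V, W ≤ w) ∧
      (#(A ∩ Icc (W + a - b) a) : ℤ) + #(B ∩ Icc W b) ≤ b - W + 1 := by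
    rcases V.eq_empty_or_nonempty with h | h
    · refine ⟨b + 1, by omega, by omega, by simp [h], ?_⟩
      rw [Finset.Icc_eq_empty (by omega), Finset.Icc_eq_empty (by omega)]
      simp
    · have hm := Finset.min'_mem V h
      have := ((mV _).1 hm).1
      exact ⟨V.min' h, hXV _ hm, by omega, fun x hx => Finset.min'_le _ _ hx, bV _ hm⟩
  refine ⟨X + 1, a + W - 1, fun t ht => ?_, ?_⟩
  · rw [Finset.mem_Icc] at ht
    by_contra htm
    have ht0 : t ≠ 0 := by
      rintro rfl; exact htm (by simpa using Finset.add_mem_add hA0 hB0)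
    have htab : t ≠ a + b := by
      rintro rfl; exact htm (Finset.add_mem_add hAa hBb)
    by_cases h6 : t < b
    · have := hXU t ((mU t).2 ⟨by omega, htm⟩)
      omega
    · have h7 : a < t := by
        by_contra! h7
        exact htm (mid t (by omega) h7)
      have := hWV (t - a) ((mV _).2 ⟨by omega, by simpa using htm⟩)
      omega
  · have h1 := card_le_two_add_gap (A := A) (x := 0) (y := X) (x' := W + a - b) (y' := a)
      (by omega) hA'
    have h2 := card_le_two_add_gap (A := B) (x := 0) (y := X) (x' := W) (y' := b) hW1 hB'
    omega

end Interval

/-! ### Normalization of a set of integers with small doubling -/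

section Normalize

/-- A finite set of integers with `|2S| ≤ 3|S| - 4` is an affine image of a set `S₁ ⊆ [0, a]`
with `a ≤ |2S| - |S|` whose sumset contains an interval of length `2|S| - 1`. -/
theorem exists_normalized {S : Finset ℤ} (hS2 : 2 ≤ #S) (hs : #(S + S) + 4 ≤ 3 * #S) :
    ∃ (m g a : ℤ) (S₁ : Finset ℤ), 1 ≤ g ∧ S = S₁.image (fun x => m + g * x) ∧ #S₁ = #S ∧
      (0 : ℤ) ∈ S₁ ∧ a ∈ S₁ ∧ S₁ ⊆ Icc 0 a ∧ a + #S ≤ #(S + S) ∧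
      ∃ u : ℤ, Icc u (u + (2 * #S - 2)) ⊆ S₁ + S₁ := by
  have hne : S.Nonempty := Finset.card_pos.1 (by omega)
  set m := S.min' hne with hm
  set T := S.image (fun x => x - m) with hT
  obtain ⟨g₀, hg₀⟩ := Int.subgroup_cyclic (AddSubgroup.closure (T : Set ℤ))
  obtain ⟨g, hg0, hg⟩ : ∃ g : ℤ, 0 ≤ g ∧
      AddSubgroup.closure (T : Set ℤ) = AddSubgroup.zmultiples g := by
    rw [← AddSubgroup.zmultiples_eq_closure] at hg₀
    rcases le_total 0 g₀ with h | h
    · exact ⟨g₀, h, hg₀⟩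
    · exact ⟨-g₀, by omega, by rw [hg₀, AddSubgroup.zmultiples_neg]⟩
  have hTg : ∀ t ∈ T, ∃ y, t = g * y := by
    intro t ht
    have : t ∈ AddSubgroup.zmultiples g := hg ▸ AddSubgroup.subset_closure ht
    obtain ⟨y, hy⟩ := AddSubgroup.mem_zmultiples_iff.1 this
    exact ⟨y, by rw [← hy, smul_eq_mul, mul_comm]⟩
  have hgpos : 1 ≤ g := by
    rcases eq_or_lt_of_le hg0 with h | h
    · exfalso
      have : S ⊆ {m} := by
        intro x hx
        obtain ⟨y, hy⟩ := hTg (x - m) (Finset.mem_image_of_mem _ hx)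
        rw [← h, zero_mul] at hy
        rw [Finset.mem_singleton]; omega
      have := card_le_card this
      rw [Finset.card_singleton] at this
      omega
    · exact h
  set S₁ := T.image (fun x => x / g) with hS₁
  have hTS : T = S₁.image (fun x => g * x) := by
    rw [hS₁, Finset.image_image]
    conv_lhs => rw [← Finset.image_id (s := T)]
    refine Finset.image_congr fun t ht => ?_
    obtain ⟨y, rfl⟩ := hTg t ht
    simp only [id, Function.comp]
    rw [Int.mul_ediv_cancel_left _ (by omega)]
  have hSS : S = S₁.image (fun x => m + g * x) := by
    have h1 : S = T.image (fun x => m + x) := by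
      rw [hT, Finset.image_image]
      conv_lhs => rw [← Finset.image_id (s := S)]
      refine Finset.image_congr fun t ht => ?_
      simp
    rw [h1, hTS, Finset.image_image]
    rfl
  have hinj : ∀ c : ℤ, Function.Injective (fun x : ℤ => c + g * x) := by
    intro c x y hxy
    simp only [add_right_inj] at hxy
    exact mul_left_cancel₀ (by omega) hxy
  have hcard : #S₁ = #S := by
    conv_rhs => rw [hSS]
    exact (card_image_of_injective _ (hinj m)).symm
  have hcard2 : #(S₁ + S₁) = #(S + S) := by
    have : S + S = (S₁ + S₁).image (fun x => (m + m) + g * x) := by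
      conv_lhs => rw [hSS]
      ext z
      simp only [Finset.mem_add, Finset.mem_image]
      constructor
      · rintro ⟨_, ⟨x, hx, rfl⟩, _, ⟨y, hy, rfl⟩, rfl⟩
        exact ⟨x + y, ⟨x, hx, y, hy, rfl⟩, by ring⟩
      · rintro ⟨_, ⟨x, hx, y, hy, rfl⟩, rfl⟩
        exact ⟨_, ⟨x, hx, rfl⟩, _, ⟨y, hy, rfl⟩, by ring⟩
    rw [this, card_image_of_injective _ (hinj _)]
  have h0T : (0 : ℤ) ∈ T := Finset.mem_image.2 ⟨m, Finset.min'_mem _ _, by simp⟩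
  have h0 : (0 : ℤ) ∈ S₁ := Finset.mem_image.2 ⟨0, h0T, by simp⟩
  have hnn : ∀ x ∈ S₁, 0 ≤ x := by
    intro x hx
    have h1 : m + g * x ∈ S := by rw [hSS]; exact Finset.mem_image_of_mem _ hx
    have h2 := Finset.min'_le S _ h1
    have h3 : 0 ≤ g * x := by rw [← hm] at h2; omega
    exact nonneg_of_mul_nonneg_right h3 (by omega)
  have hcl : AddSubgroup.closure (S₁ : Set ℤ) = ⊤ := by
    have h1 : (AddSubgroup.closure (S₁ : Set ℤ)).map (AddMonoidHom.mulLeft g) =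
        AddSubgroup.zmultiples g := by
      rw [AddMonoidHom.map_closure, ← hg, hTS]
      simp
    have h2 : g ∈ (AddSubgroup.closure (S₁ : Set ℤ)).map (AddMonoidHom.mulLeft g) := by
      rw [h1]; exact AddSubgroup.mem_zmultiples g
    obtain ⟨y, hy, hyg⟩ := h2
    have hy1 : y = 1 := by
      simp only [AddMonoidHom.coe_mulLeft] at hyg
      exact mul_left_cancel₀ (show g ≠ 0 by omega) (by rw [hyg, mul_one])
    subst hy1
    rw [AddSubgroup.eq_top_iff']
    intro x
    have := AddSubgroup.zsmul_mem _ hy x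
    simpa using this
  have hne₁ : S₁.Nonempty := ⟨0, h0⟩
  set a := S₁.max' hne₁ with ha
  have haS : a ∈ S₁ := Finset.max'_mem _ _
  have hsub : S₁ ⊆ Icc 0 a := fun x hx => Finset.mem_Icc.2 ⟨hnn x hx, Finset.le_max' _ _ hx⟩
  have hfr : a + #S₁ ≤ #(S₁ + S₁) := freiman_normalized h0 haS hsub hcl (by omega)
  obtain ⟨u, v, huv, hlen⟩ := exists_Icc_subset_add h0 haS hsub h0 haS hsub le_rfl
    (by omega) (by omega)
  refine ⟨m, g, a, S₁, hgpos, hSS, hcard, h0, haS, hsub, by omega, u,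
    (Finset.Icc_subset_Icc_right (by omega)).trans huv⟩

end Normalize

/-! ### From the integers to `ℤ/pℤ` -/

section Rectification

variable {p : ℕ}

/-- The set `A` is contained in a short progression and `2A` contains a long one, with the same
difference. -/
def HasProgressions (A : Finset (ZMod p)) : Prop :=
  ∃ g : ZMod p, g ≠ 0 ∧ ∃ PA P2A : Finset (ZMod p),
    IsAPWith g PA ∧ IsAPWith g P2A ∧ A ⊆ PA ∧ #PA + #A ≤ #(A + A) + 1 ∧
    P2A ⊆ A + A ∧ 2 * #A ≤ #P2A + 1

lemma injective_affine [Fact p.Prime] {g : ZMod p} (hg : g ≠ 0) (m : ZMod p) :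
    Function.Injective (fun x : ZMod p => m + g * x) := by
  intro x y hxy
  simp only [add_right_inj] at hxy
  exact mul_left_cancel₀ hg hxy

lemma image_affine_add (g m m' : ZMod p) (A B : Finset (ZMod p)) :
    A.image (fun x => m + g * x) + B.image (fun x => m' + g * x) =
      (A + B).image (fun x => (m + m') + g * x) := by
  ext z
  simp only [Finset.mem_add, Finset.mem_image]
  constructor
  · rintro ⟨_, ⟨x, hx, rfl⟩, _, ⟨y, hy, rfl⟩, rfl⟩
    exact ⟨x + y, ⟨x, hx, y, hy, rfl⟩, by ring⟩
  · rintro ⟨_, ⟨x, hx, y, hy, rfl⟩, rfl⟩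
    exact ⟨_, ⟨x, hx, rfl⟩, _, ⟨y, hy, rfl⟩, by ring⟩

lemma IsAPWith.affine {h : ZMod p} {P : Finset (ZMod p)} (hP : IsAPWith h P) (g m : ZMod p) :
    IsAPWith (g * h) (P.image (fun x => m + g * x)) := by
  obtain ⟨a, k, hk, rfl⟩ := hP
  refine ⟨m + g * a, k, hk, ?_⟩
  rw [Finset.image_image]
  refine Finset.image_congr fun i _ => ?_
  simp only [Function.comp]
  ring

lemma HasProgressions.affine [Fact p.Prime] {B : Finset (ZMod p)} (h : HasProgressions B)
    {g : ZMod p} (hg : g ≠ 0) (m : ZMod p) :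
    HasProgressions (B.image (fun x => m + g * x)) := by
  obtain ⟨d, hd, P, Q, hP, hQ, h1, h2, h3, h4⟩ := h
  refine ⟨g * d, mul_ne_zero hg hd, _, _, hP.affine g m, hQ.affine g (m + m),
    Finset.image_subset_image h1, ?_, ?_, ?_⟩
  · rw [image_affine_add, card_image_of_injective _ (injective_affine hg _),
      card_image_of_injective _ (injective_affine hg _),
      card_image_of_injective _ (injective_affine hg _)]
    exact h2
  · rw [image_affine_add]
    exact Finset.image_subset_image h3
  · rw [card_image_of_injective _ (injective_affine hg _),
      card_image_of_injective _ (injective_affine hg _)]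
    exact h4

/-- Reduction modulo `p` is injective on windows of length at most `p`. -/
lemma cast_injOn_window {x y u : ℤ} (hx : u ≤ x ∧ x < u + p) (hy : u ≤ y ∧ y < u + p)
    (h : (x : ZMod p) = y) : x = y := by
  rw [ZMod.intCast_eq_intCast_iff_dvd_sub] at h
  have := Int.eq_zero_of_abs_lt_dvd h (by rw [abs_lt]; omega)
  omega

lemma exists_lift [NeZero p] (u : ℤ) (q : ZMod p) :
    ∃ c : ℤ, (u ≤ c ∧ c < u + p) ∧ (c : ZMod p) = q := by
  refine ⟨u + ((q - (u : ZMod p)).val : ℤ), ?_, ?_⟩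
  · have := ZMod.val_lt (q - (u : ZMod p))
    omega
  · push_cast
    rw [ZMod.natCast_zmod_val]
    ring

/-- The lift of a set of residues to the window `[u, u + p)`. -/
noncomputable def windowLift (u : ℤ) (Q : Finset (ZMod p)) : Finset ℤ :=
  {c ∈ Ico u (u + p) | (c : ZMod p) ∈ Q}

lemma mem_windowLift {u c : ℤ} {Q : Finset (ZMod p)} :
    c ∈ windowLift u Q ↔ (u ≤ c ∧ c < u + p) ∧ (c : ZMod p) ∈ Q := by
  rw [windowLift, Finset.mem_filter, Finset.mem_Ico]

lemma image_windowLift [NeZero p] (u : ℤ) (Q : Finset (ZMod p)) :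
    (windowLift u Q).image (Int.cast : ℤ → ZMod p) = Q := by
  ext q
  rw [Finset.mem_image]
  constructor
  · rintro ⟨c, hc, rfl⟩; exact (mem_windowLift.1 hc).2
  · intro hq
    obtain ⟨c, hc, rfl⟩ := exists_lift u q
    exact ⟨c, mem_windowLift.2 ⟨hc, hq⟩, rfl⟩

lemma card_image_cast {S : Finset ℤ} {u : ℤ} (hS : ∀ x ∈ S, u ≤ x ∧ x < u + p) :
    #(S.image (Int.cast : ℤ → ZMod p)) = #S :=
  card_image_of_injOn fun _ hx _ hy h => cast_injOn_window (hS _ hx) (hS _ hy) h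

lemma card_windowLift [NeZero p] (u : ℤ) (Q : Finset (ZMod p)) : #(windowLift u Q) = #Q := by
  conv_rhs => rw [← image_windowLift u Q]
  exact (card_image_cast fun _ hx => (mem_windowLift.1 hx).1).symm

lemma image_cast_add (S T : Finset ℤ) :
    (S + T).image (Int.cast : ℤ → ZMod p) = S.image Int.cast + T.image Int.cast := by
  ext z
  simp only [Finset.mem_add, Finset.mem_image]
  constructor
  · rintro ⟨_, ⟨x, hx, y, hy, rfl⟩, rfl⟩
    exact ⟨_, ⟨x, hx, rfl⟩, _, ⟨y, hy, rfl⟩, by push_cast; ring⟩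
  · rintro ⟨_, ⟨x, hx, rfl⟩, _, ⟨y, hy, rfl⟩, rfl⟩
    exact ⟨_, ⟨x, hx, y, hy, rfl⟩, by push_cast; ring⟩

/-- A set of integers in a window of length at most `(p + 1) / 2` has the same doubling as its
reduction modulo `p`. -/
lemma card_image_cast_add {S : Finset ℤ} {u l : ℤ} (hS : ∀ x ∈ S, u ≤ x ∧ x < u + l)
    (hl : 2 * l ≤ p + 1) :
    #(S.image (Int.cast : ℤ → ZMod p) + S.image (Int.cast : ℤ → ZMod p)) = #(S + S) := by
  rw [← image_cast_add]
  refine card_image_cast (u := 2 * u) fun z hz => ?_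
  obtain ⟨x, hx, y, hy, rfl⟩ := Finset.mem_add.1 hz
  have := hS x hx
  have := hS y hy
  omega

/-- The dilation factor of a nondegenerate progression inside a window shorter than `p` is not
divisible by `p`. -/
lemma cast_ne_zero_of_window {S S₁ : Finset ℤ} {u m g a : ℤ} (hS : ∀ x ∈ S, u ≤ x ∧ x < u + p)
    (hg : 1 ≤ g) (hSS : S = S₁.image (fun x => m + g * x)) (h0 : (0 : ℤ) ∈ S₁) (ha : a ∈ S₁)
    (ha1 : 1 ≤ a) : (g : ZMod p) ≠ 0 := by
  intro h
  have h1 := hS (m + g * 0) (by rw [hSS]; exact Finset.mem_image_of_mem _ h0)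
  have h2 := hS (m + g * a) (by rw [hSS]; exact Finset.mem_image_of_mem _ ha)
  have h3 := cast_injOn_window h1 h2 (by push_cast; rw [h]; ring)
  have : 1 ≤ g * a := by nlinarith
  omega

/-- If `B` lies in an arc of length at most `(p + 1) / 2`, the integer theorem applies. -/
lemma hasProgressions_of_window [Fact p.Prime] {B : Finset (ZMod p)} {S : Finset ℤ} {u l : ℤ}
    (hSB : S.image (Int.cast : ℤ → ZMod p) = B) (hS : ∀ x ∈ S, u ≤ x ∧ x < u + l)
    (hl : 2 * l ≤ p + 1) (h2 : 2 ≤ #B) (hn : #(B + B) + 4 ≤ 3 * #B) (hBp : 2 * #B ≤ p + 1) :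
    HasProgressions B := by
  have hp := (Fact.out : p.Prime).two_le
  have hSp : ∀ x ∈ S, u ≤ x ∧ x < u + p := fun x hx => by have := hS x hx; omega
  have hc : #B = #S := by rw [← hSB]; exact card_image_cast hSp
  have hc2 : #(B + B) = #(S + S) := by rw [← hSB]; exact card_image_cast_add hS hl
  obtain ⟨m, g, a, S₁, hg, hSS, hS₁, h0, ha, hsub, hfr, w, hw⟩ :=
    exists_normalized (S := S) (by omega) (by omega)
  have ha1 : 1 ≤ a := by
    have := card_le_card hsub
    rw [Int.card_Icc] at this
    omega
  have hg0 : (g : ZMod p) ≠ 0 := cast_ne_zero_of_window hSp hg hSS h0 ha ha1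
  have hBS : ∀ x, x ∈ B ↔ ∃ y ∈ S₁, (m : ZMod p) + g * y = x := by
    intro x
    rw [← hSB, hSS, Finset.image_image, Finset.mem_image]
    simp
  refine ⟨g, hg0, (range (a.toNat + 1)).image (fun i : ℕ => (m : ZMod p) + (i : ZMod p) * g),
    (range (2 * #B - 1)).image (fun i : ℕ => ((2 * m + g * w : ℤ) : ZMod p) + (i : ZMod p) * g),
    ⟨_, _, by omega, rfl⟩, ⟨_, _, by omega, rfl⟩, ?_, ?_, ?_, ?_⟩
  · intro x hx
    obtain ⟨y, hy, rfl⟩ := (hBS x).1 hx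
    have hyI := Finset.mem_Icc.1 (hsub hy)
    refine Finset.mem_image.2 ⟨y.toNat, Finset.mem_range.2 (by omega), ?_⟩
    have : ((y.toNat : ℕ) : ZMod p) = (y : ZMod p) := by
      conv_rhs => rw [← Int.toNat_of_nonneg hyI.1]
      rw [Int.cast_natCast]
    rw [this]; ring
  · have := Finset.card_image_le (s := range (a.toNat + 1))
      (f := fun i : ℕ => (m : ZMod p) + (i : ZMod p) * g)
    rw [Finset.card_range] at this
    omega
  · intro x hx
    obtain ⟨i, hi, rfl⟩ := Finset.mem_image.1 hx
    rw [Finset.mem_range] at hi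
    have h3 : w + (i : ℤ) ∈ S₁ + S₁ := hw (Finset.mem_Icc.2 (by omega))
    obtain ⟨y, hy, z, hz, hyz⟩ := Finset.mem_add.1 h3
    refine Finset.mem_add.2 ⟨_, (hBS _).2 ⟨y, hy, rfl⟩, _, (hBS _).2 ⟨z, hz, rfl⟩, ?_⟩
    have h4 : (y : ZMod p) + z = w + i := by exact_mod_cast congrArg (Int.cast : ℤ → ZMod p) hyz
    push_cast
    linear_combination (g : ZMod p) * h4
  · rw [card_image_of_injOn, Finset.card_range]
    · omega
    · intro i hi j hj hij
      simp only [Finset.coe_range, Set.mem_Iio] at hi hj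
      simp only [add_right_inj] at hij
      have h5 := mul_right_cancel₀ hg0 hij
      have h6 := cast_injOn_window (p := p) (u := 0) (x := i) (y := j) (by omega) (by omega)
        (by push_cast; exact h5)
      exact_mod_cast h6

/-- If `B` contains a set of integers `S₁ ⊆ [0, a]` whose sumset contains an interval of length
`2|S₁| - 1`, and `|2B|` is small compared with `p`, `|B|` and `|S₁|`, then `B` is contained in an
arc of length at most `(p + 1) / 2`.

The complement `C` of `2B` misses that interval, hence is also contained in an arc. Since `C - S₁`
is disjoint from `B`, it is small, so it contains a long interval, which `B` must avoid. -/
lemma exists_window [Fact p.Prime] {B : Finset (ZMod p)} {S₁ : Finset ℤ} {a u : ℤ}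
    (h0 : (0 : ℤ) ∈ S₁) (ha : a ∈ S₁) (hsub : S₁ ⊆ Icc 0 a)
    (hSB : ∀ x ∈ S₁, (x : ZMod p) ∈ B) (hu : Icc u (u + (2 * #S₁ - 2)) ⊆ S₁ + S₁)
    (hfr : a + #S₁ ≤ #(B + B)) (hs : #(B + B) + 4 ≤ 3 * #S₁) (hp4 : 4 * #(B + B) + 1 ≤ 3 * p)
    (hk : 4 * #(B + B) + 12 ≤ 9 * #B) (hn9 : 9 ≤ #(B + B)) :
    ∃ (S : Finset ℤ) (w l : ℤ), S.image (Int.cast : ℤ → ZMod p) = B ∧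
      (∀ x ∈ S, w ≤ x ∧ x < w + l) ∧ 2 * l ≤ p + 1 := by
  have : NeZero p := ⟨(Fact.out : p.Prime).ne_zero⟩
  set n := #(B + B) with hn
  set s := #S₁ with hs₁
  set C := windowLift u (B + B)ᶜ with hC
  have cC : #C + n = p := by
    rw [hC, card_windowLift, Finset.card_compl, ZMod.card]
    have := Finset.card_le_univ (B + B)
    rw [ZMod.card] at this
    omega
  have hCI : ∀ c ∈ C, u + (2 * s - 1) ≤ c ∧ c ≤ u + p - 1 := by
    intro c hc
    rw [hC, mem_windowLift, Finset.mem_compl] at hc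
    obtain ⟨hc1, hc2⟩ := hc
    refine ⟨?_, by omega⟩
    by_contra! hlt
    obtain ⟨x, hx, y, hy, rfl⟩ := Finset.mem_add.1 (hu (Finset.mem_Icc.2 (by omega : _ ∧ c ≤ _)))
    apply hc2
    push_cast
    exact Finset.add_mem_add (hSB x hx) (hSB y hy)
  have hCne : C.Nonempty := Finset.card_pos.1 (by omega)
  set c₀ := C.min' hCne with hc₀
  set M := C.max' hCne - c₀ with hM
  have hc₀C : c₀ ∈ C := Finset.min'_mem _ _
  have hc₁C : C.max' hCne ∈ C := Finset.max'_mem _ _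
  set C₀ := C.image (fun c => c - c₀) with hC₀
  set S' := S₁.image (fun x => a - x) with hS'
  have cC₀ : #C₀ = #C := card_image_of_injective _ (sub_left_injective)
  have cS' : #S' = s := card_image_of_injective _ (sub_right_injective)
  have C₀0 : (0 : ℤ) ∈ C₀ := Finset.mem_image.2 ⟨c₀, hc₀C, by simp⟩
  have C₀M : M ∈ C₀ := Finset.mem_image.2 ⟨_, hc₁C, rfl⟩
  have C₀I : C₀ ⊆ Icc 0 M := by
    intro x hx
    obtain ⟨c, hc, rfl⟩ := Finset.mem_image.1 hx
    have h1 := Finset.min'_le C c hc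
    have h2 := Finset.le_max' C c hc
    rw [Finset.mem_Icc]; omega
  have S'0 : (0 : ℤ) ∈ S' := Finset.mem_image.2 ⟨a, ha, by simp⟩
  have S'a : a ∈ S' := Finset.mem_image.2 ⟨0, h0, by simp⟩
  have S'I : S' ⊆ Icc 0 a := by
    intro x hx
    obtain ⟨c, hc, rfl⟩ := Finset.mem_image.1 hx
    have := Finset.mem_Icc.1 (hsub hc)
    rw [Finset.mem_Icc]; omega
  have hMle : M ≤ p - 2 * s := by
    have := hCI _ hc₀C
    have := hCI _ hc₁C
    omega
  have hDB : ∀ d ∈ C₀ + S', ((d + (c₀ - a) : ℤ) : ZMod p) ∉ B := by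
    intro d hd hB
    obtain ⟨x, hx, y, hy, rfl⟩ := Finset.mem_add.1 hd
    obtain ⟨c, hc, rfl⟩ := Finset.mem_image.1 hx
    obtain ⟨z, hz, rfl⟩ := Finset.mem_image.1 hy
    rw [hC, mem_windowLift, Finset.mem_compl] at hc
    apply hc.2
    have h1 := Finset.add_mem_add hB (hSB z hz)
    convert h1 using 1
    push_cast
    ring
  have cD : #(C₀ + S') + #B ≤ p := by
    have h1 : #((C₀ + S').image (fun d => ((d + (c₀ - a) : ℤ) : ZMod p))) = #(C₀ + S') := by
      refine card_image_of_injOn fun x hx y hy hxy => ?_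
      have hI : ∀ z ∈ C₀ + S', (c₀ - a) ≤ z + (c₀ - a) ∧ z + (c₀ - a) < (c₀ - a) + p := by
        intro z hz
        obtain ⟨v, hv, w, hw, rfl⟩ := Finset.mem_add.1 hz
        have := Finset.mem_Icc.1 (C₀I hv)
        have := Finset.mem_Icc.1 (S'I hw)
        omega
      have := cast_injOn_window (hI x hx) (hI y hy) hxy
      omega
    have h2 : (C₀ + S').image (fun d => ((d + (c₀ - a) : ℤ) : ZMod p)) ⊆ Bᶜ := by
      intro z hz
      obtain ⟨d, hd, rfl⟩ := Finset.mem_image.1 hz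
      exact Finset.mem_compl.2 (hDB d hd)
    have h3 := card_le_card h2
    rw [h1, Finset.card_compl, ZMod.card] at h3
    have := Finset.card_le_univ B
    rw [ZMod.card] at this
    omega
  obtain ⟨v, w, hvw, hlen⟩ : ∃ v w : ℤ, Icc v w ⊆ C₀ + S' ∧ (p : ℤ) - n + s ≤ w - v + 2 := by
    rcases le_total M a with h | h
    · obtain ⟨v, w, h1, h2⟩ := exists_Icc_subset_add S'0 S'a S'I C₀0 C₀M C₀I h (by omega)
        (by rw [add_comm S' C₀]; omega)
      exact ⟨v, w, by rwa [add_comm], by omega⟩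
    · obtain ⟨v, w, h1, h2⟩ := exists_Icc_subset_add C₀0 C₀M C₀I S'0 S'a S'I h (by omega)
        (by omega)
      exact ⟨v, w, h1, by omega⟩
  refine ⟨windowLift (v + (c₀ - a)) B, v + (c₀ - a) + (p - n + s - 1), n - s + 1,
    image_windowLift _ _, fun x hx => ?_, by omega⟩
  rw [mem_windowLift] at hx
  refine ⟨?_, by omega⟩
  by_contra! hlt
  have h1 := hDB (x - (c₀ - a)) (hvw (Finset.mem_Icc.2 (by omega)))
  rw [sub_add_cancel] at h1
  exact h1 hx.2

/-- If a half-arc contains a subset `S` of `A` with `3|S| ≥ |2A| + 4`, then the integer theorem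
applies to `S`; it rescales `A` so that `S` becomes dense in an arc, which `exists_window`
propagates to all of `A`. -/
lemma hasProgressions_of_half [Fact p.Prime] {A : Finset (ZMod p)} {S : Finset ℤ} {u l : ℤ}
    (hSA : ∀ x ∈ S, (x : ZMod p) ∈ A) (hS : ∀ x ∈ S, u ≤ x ∧ x < u + l) (hl : 2 * l ≤ p + 1)
    (hs : #(A + A) + 4 ≤ 3 * #S) (hp4 : 4 * #(A + A) + 1 ≤ 3 * p)
    (hk : 4 * #(A + A) + 12 ≤ 9 * #A) (hn9 : 9 ≤ #(A + A)) (hkp : 2 * #A ≤ p + 1) :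
    HasProgressions A := by
  have hp := (Fact.out : p.Prime).two_le
  have hSp : ∀ x ∈ S, u ≤ x ∧ x < u + p := fun x hx => by have := hS x hx; omega
  have hSA' : S.image (Int.cast : ℤ → ZMod p) ⊆ A := by
    intro z hz
    obtain ⟨x, hx, rfl⟩ := Finset.mem_image.1 hz
    exact hSA x hx
  have hSA2 : #S ≤ #A := by
    rw [← card_image_cast hSp]; exact card_le_card hSA'
  have hS2 : #(S + S) ≤ #(A + A) := by
    rw [← card_image_cast_add hS hl]
    exact card_le_card (Finset.add_subset_add hSA' hSA')
  obtain ⟨m, g, a, S₁, hg, hSS, hS₁, h0, ha, hsub, hfr, w, hw⟩ :=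
    exists_normalized (S := S) (by omega) (by omega)
  have ha1 : 1 ≤ a := by
    have := card_le_card hsub
    rw [Int.card_Icc] at this
    omega
  have hg0 : (g : ZMod p) ≠ 0 := cast_ne_zero_of_window hSp hg hSS h0 ha ha1
  set B := A.image (fun x => -((g : ZMod p)⁻¹ * m) + (g : ZMod p)⁻¹ * x) with hB
  have hgi : (g : ZMod p)⁻¹ ≠ 0 := inv_ne_zero hg0
  have hAB : A = B.image (fun x => (m : ZMod p) + g * x) := by
    rw [hB, Finset.image_image]
    conv_lhs => rw [← Finset.image_id (s := A)]
    refine Finset.image_congr fun t _ => ?_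
    simp only [id, Function.comp]
    field_simp
    ring
  have hBc : #B = #A := card_image_of_injective _ (injective_affine hgi _)
  have hBc2 : #(B + B) = #(A + A) := by
    rw [hB, image_affine_add, card_image_of_injective _ (injective_affine hgi _)]
  have hSB : ∀ x ∈ S₁, (x : ZMod p) ∈ B := by
    intro x hx
    refine Finset.mem_image.2 ⟨((m + g * x : ℤ) : ZMod p), hSA _ ?_, ?_⟩
    · rw [hSS]; exact Finset.mem_image_of_mem _ hx
    · push_cast
      field_simp
      ring
  obtain ⟨T, v, l', hT1, hT2, hT3⟩ := exists_window h0 ha hsub hSB (by rw [hS₁]; exact hw)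
    (by omega) (by omega) (by omega) (by omega) (by omega)
  rw [hAB]
  exact (hasProgressions_of_window hT1 hT2 hT3 (by omega) (by omega) (by omega)).affine hg0 m

end Rectification

/-! ### Fourier analysis -/

section Fourier

variable {p : ℕ} [Fact p.Prime]

open ComplexConjugate

/-- The exponential sum of `A` at the frequency `t`. -/
noncomputable def expSum (A : Finset (ZMod p)) (t : ZMod p) : ℂ :=
  ∑ a ∈ A, ZMod.stdAddChar (t * a)

lemma sum_char (x : ZMod p) :
    ∑ t : ZMod p, (ZMod.stdAddChar (t * x) : ℂ) = if x = 0 then (p : ℂ) else 0 := by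
  rw [AddChar.sum_mulShift x (ZMod.isPrimitive_stdAddChar p), ZMod.card]
  split_ifs <;> simp

lemma conj_expSum (A : Finset (ZMod p)) (t : ZMod p) :
    conj (expSum A t) = ∑ a ∈ A, ZMod.stdAddChar (t * (-a)) := by
  rw [expSum, map_sum]
  refine Finset.sum_congr rfl fun a _ => ?_
  rw [← AddChar.map_neg_eq_conj, mul_neg]

/-- Parseval's identity. -/
lemma sum_norm_expSum_sq (A : Finset (ZMod p)) :
    ∑ t : ZMod p, ‖expSum A t‖ ^ 2 = p * #A := by
  have h : ∑ t : ZMod p, expSum A t * conj (expSum A t) = p * #A := by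
    have h1 : ∀ t : ZMod p, expSum A t * conj (expSum A t) =
        ∑ a ∈ A, ∑ b ∈ A, (ZMod.stdAddChar (t * (a - b)) : ℂ) := by
      intro t
      rw [conj_expSum, expSum, Finset.sum_mul_sum]
      refine Finset.sum_congr rfl fun a _ => Finset.sum_congr rfl fun b _ => ?_
      rw [← AddChar.map_add_eq_mul]
      congr 1; ring
    simp_rw [h1]
    rw [Finset.sum_comm]
    have h2 : ∀ a ∈ A, ∑ t : ZMod p, ∑ b ∈ A, (ZMod.stdAddChar (t * (a - b)) : ℂ) = p := by
      intro a ha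
      rw [Finset.sum_comm]
      simp_rw [sum_char, sub_eq_zero]
      simp [ha]
    rw [Finset.sum_congr rfl h2]
    simp [mul_comm]
  have h3 : ((∑ t : ZMod p, ‖expSum A t‖ ^ 2 : ℝ) : ℂ) = ((p * #A : ℝ) : ℂ) := by
    push_cast
    rw [← h]
    refine Finset.sum_congr rfl fun t _ => ?_
    rw [Complex.mul_conj']
  exact_mod_cast h3

/-- The number of solutions of `a + b = c` with `a, b ∈ A` and `c ∈ 2A`, in Fourier terms. -/
lemma sum_expSum_sq_mul (A : Finset (ZMod p)) :
    ∑ t : ZMod p, expSum A t ^ 2 * conj (expSum (A + A) t) = p * (#A : ℂ) ^ 2 := by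
  have h1 : ∀ t : ZMod p, expSum A t ^ 2 * conj (expSum (A + A) t) =
      ∑ a ∈ A, ∑ b ∈ A, ∑ c ∈ A + A, (ZMod.stdAddChar (t * (a + b - c)) : ℂ) := by
    intro t
    rw [conj_expSum, sq, expSum, Finset.sum_mul_sum, Finset.sum_mul]
    refine Finset.sum_congr rfl fun a _ => ?_
    rw [Finset.sum_mul]
    refine Finset.sum_congr rfl fun b _ => ?_
    rw [Finset.mul_sum]
    refine Finset.sum_congr rfl fun c _ => ?_
    rw [← AddChar.map_add_eq_mul, ← AddChar.map_add_eq_mul]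
    congr 1; ring
  simp_rw [h1]
  rw [Finset.sum_comm]
  have h2 : ∀ a ∈ A, ∑ t : ZMod p, ∑ b ∈ A, ∑ c ∈ A + A,
      (ZMod.stdAddChar (t * (a + b - c)) : ℂ) = #A * p := by
    intro a ha
    rw [Finset.sum_comm]
    have h3 : ∀ b ∈ A, ∑ t : ZMod p, ∑ c ∈ A + A,
        (ZMod.stdAddChar (t * (a + b - c)) : ℂ) = p := by
      intro b hb
      rw [Finset.sum_comm]
      simp_rw [sum_char, sub_eq_zero]
      simp [Finset.add_mem_add ha hb]
    rw [Finset.sum_congr rfl h3]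
    simp
  rw [Finset.sum_congr rfl h2]
  simp only [Finset.sum_const, nsmul_eq_mul]
  ring

lemma expSum_zero (A : Finset (ZMod p)) : expSum A 0 = #A := by
  simp [expSum]

/-- If all nontrivial exponential sums of `A` are at most `θ|A|`, then
`|A| (p - |2A|) ≤ θ² |2A| (p - |A|)`. -/
lemma card_mul_le_of_expSum_le {A : Finset (ZMod p)} (hA : A.Nonempty) {θ : ℝ}
    (h : ∀ t : ZMod p, t ≠ 0 → ‖expSum A t‖ ≤ θ * #A) :
    (#A : ℝ) * (p - #(A + A)) ≤ θ ^ 2 * #(A + A) * (p - #A) := by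
  set k : ℝ := ((#A : ℕ) : ℝ) with hk
  set n : ℝ := ((#(A + A) : ℕ) : ℝ) with hn
  have hkpos : 0 < k := by rw [hk]; exact_mod_cast Finset.card_pos.2 hA
  have hnp : n ≤ p := by
    have := Finset.card_le_univ (A + A)
    rw [ZMod.card] at this
    rw [hn]; exact_mod_cast this
  set E := (Finset.univ : Finset (ZMod p)).erase 0 with hE
  have split : ∀ f : ZMod p → ℝ, ∑ t ∈ E, f t = ∑ t, f t - f 0 := fun f => by
    rw [hE, ← Finset.add_sum_erase _ f (Finset.mem_univ 0)]; ring
  have splitC : ∀ f : ZMod p → ℂ, ∑ t ∈ E, f t = ∑ t, f t - f 0 := fun f => by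
    rw [hE, ← Finset.add_sum_erase _ f (Finset.mem_univ 0)]; ring
  have p1 : ∑ t ∈ E, ‖expSum A t‖ ^ 2 = k * (p - k) := by
    rw [split, sum_norm_expSum_sq, expSum_zero, Complex.norm_natCast]; ring
  have p2 : ∑ t ∈ E, ‖expSum (A + A) t‖ ^ 2 = n * (p - n) := by
    rw [split, sum_norm_expSum_sq, expSum_zero, Complex.norm_natCast]; ring
  have p3 : ∑ t ∈ E, expSum A t ^ 2 * conj (expSum (A + A) t) = ((k ^ 2 * (p - n) : ℝ) : ℂ) := by
    rw [splitC, sum_expSum_sq_mul, expSum_zero, expSum_zero]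
    simp only [hk, hn]
    push_cast
    rw [Complex.conj_natCast]
    ring
  have b1 : k ^ 2 * (p - n) ≤ θ * k * ∑ t ∈ E, ‖expSum A t‖ * ‖expSum (A + A) t‖ := by
    calc k ^ 2 * (p - n) ≤ ‖((k ^ 2 * (p - n) : ℝ) : ℂ)‖ := by
          rw [Complex.norm_real]; exact le_abs_self _
      _ = ‖∑ t ∈ E, expSum A t ^ 2 * conj (expSum (A + A) t)‖ := by rw [p3]
      _ ≤ ∑ t ∈ E, ‖expSum A t ^ 2 * conj (expSum (A + A) t)‖ := norm_sum_le _ _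
      _ ≤ ∑ t ∈ E, θ * k * (‖expSum A t‖ * ‖expSum (A + A) t‖) := by
          refine Finset.sum_le_sum fun t ht => ?_
          rw [norm_mul, norm_pow, RCLike.norm_conj, sq, mul_assoc]
          exact mul_le_mul_of_nonneg_right (h t (Finset.ne_of_mem_erase ht)) (by positivity)
      _ = _ := by rw [Finset.mul_sum]
  have b2 := Finset.sum_mul_sq_le_sq_mul_sq E (fun t => ‖expSum A t‖) (fun t => ‖expSum (A + A) t‖)
  rw [p1, p2] at b2
  set W := ∑ t ∈ E, ‖expSum A t‖ * ‖expSum (A + A) t‖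
  have b3 : (k ^ 2 * (p - n)) ^ 2 ≤ (θ * k) ^ 2 * (k * (p - k) * (n * (p - n))) := by
    calc (k ^ 2 * (p - n)) ^ 2 ≤ (θ * k * W) ^ 2 :=
          pow_le_pow_left₀ (mul_nonneg (sq_nonneg _) (sub_nonneg.2 hnp)) b1 2
      _ = (θ * k) ^ 2 * W ^ 2 := by ring
      _ ≤ _ := mul_le_mul_of_nonneg_left b2 (sq_nonneg _)
  have hn0 : 0 ≤ n := by rw [hn]; positivity
  have hkp : k ≤ p := by
    have := Finset.card_le_univ A
    rw [ZMod.card] at this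
    rw [hk]; exact_mod_cast this
  rcases eq_or_lt_of_le hnp with h0 | h0
  · rw [h0, sub_self, mul_zero]
    exact mul_nonneg (by positivity) (sub_nonneg.2 hkp)
  · have b4 : (k ^ 3 * (p - n)) * (k * (p - n)) ≤ (k ^ 3 * (p - n)) * (θ ^ 2 * n * (p - k)) := by
      linarith [b3, show (k ^ 2 * (p - n)) ^ 2 = (k ^ 3 * (p - n)) * (k * (p - n)) by ring,
        show (θ * k) ^ 2 * (k * (p - k) * (n * (p - n))) =
          (k ^ 3 * (p - n)) * (θ ^ 2 * n * (p - k)) by ring]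
    exact le_of_mul_le_mul_left b4 (mul_pos (pow_pos hkpos 3) (sub_pos.2 h0))

end Fourier

/-! ### Exponential sums and half-planes -/

section HalfPlane

open MeasureTheory

/-- A layer-cake bound for sums of reals in `[-1, 1]`. -/
lemma sum_le_of_levels {ι : Type*} (s : Finset ι) (c : ι → ℝ) (M : ℝ)
    (hc : ∀ i ∈ s, -1 ≤ c i ∧ c i ≤ 1)
    (h : ∀ t : ℝ, 0 < t → t ≤ 1 → (#{i ∈ s | t ≤ c i} : ℝ) - #{i ∈ s | t < -c i} ≤ M) :
    ∑ i ∈ s, c i ≤ M := by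
  set μ := volume.restrict (Set.Ioc (0 : ℝ) 1) with hμ
  have hint1 : ∀ x : ℝ, Integrable ((Set.Iic x).indicator (1 : ℝ → ℝ)) μ := fun x =>
    (integrable_const (1 : ℝ)).indicator measurableSet_Iic
  have hint2 : ∀ x : ℝ, Integrable ((Set.Iio x).indicator (1 : ℝ → ℝ)) μ := fun x =>
    (integrable_const (1 : ℝ)).indicator measurableSet_Iio
  have hci : ∀ i ∈ s, ∫ t, ((Set.Iic (c i)).indicator (1 : ℝ → ℝ) t -
      (Set.Iio (-c i)).indicator (1 : ℝ → ℝ) t) ∂μ = c i := by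
    intro i hi
    obtain ⟨h1, h2⟩ := hc i hi
    rw [integral_sub (hint1 _) (hint2 _), integral_indicator_one measurableSet_Iic,
      integral_indicator_one measurableSet_Iio, hμ, measureReal_restrict_apply measurableSet_Iic,
      measureReal_restrict_apply measurableSet_Iio]
    have e1 : Set.Iic (c i) ∩ Set.Ioc 0 1 = Set.Ioc 0 (c i) := by
      ext t; simp only [Set.mem_inter_iff, Set.mem_Iic, Set.mem_Ioc]
      constructor
      · rintro ⟨h, h', _⟩; exact ⟨h', h⟩
      · rintro ⟨h, h'⟩; exact ⟨h', h, h'.trans h2⟩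
    have e2 : Set.Iio (-c i) ∩ Set.Ioc 0 1 = Set.Ioo 0 (-c i) := by
      ext t; simp only [Set.mem_inter_iff, Set.mem_Iio, Set.mem_Ioc, Set.mem_Ioo]
      constructor
      · rintro ⟨h, h', _⟩; exact ⟨h', h⟩
      · rintro ⟨h, h'⟩; exact ⟨h', h, by linarith⟩
    rw [e1, e2, Real.volume_real_Ioc, Real.volume_real_Ioo, sub_zero, sub_zero]
    rcases le_total 0 (c i) with h3 | h3
    · rw [max_eq_left h3, max_eq_right (by linarith), sub_zero]
    · rw [max_eq_right h3, max_eq_left (by linarith)]; ring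
  have hint : ∀ i ∈ s, Integrable (fun t => (Set.Iic (c i)).indicator (1 : ℝ → ℝ) t -
      (Set.Iio (-c i)).indicator (1 : ℝ → ℝ) t) μ := fun i _ => (hint1 _).sub (hint2 _)
  calc ∑ i ∈ s, c i = ∫ t, ∑ i ∈ s, ((Set.Iic (c i)).indicator (1 : ℝ → ℝ) t -
      (Set.Iio (-c i)).indicator (1 : ℝ → ℝ) t) ∂μ := by
        rw [integral_finsetSum _ hint]
        exact (Finset.sum_congr rfl hci).symm
    _ ≤ ∫ _ in Set.Ioc (0 : ℝ) 1, M := by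
        refine setIntegral_mono_on (integrable_finsetSum _ hint) (integrable_const _)
          measurableSet_Ioc fun t ht => ?_
        refine le_trans (le_of_eq ?_) (h t ht.1 ht.2)
        simp [Set.indicator_apply, Finset.sum_sub_distrib, Finset.sum_boole]
    _ = M := by simp

/-- If every closed half-plane through the origin contains at most `N` of the given unit vectors,
their sum has norm at most `2N - |s|`. -/
lemma norm_sum_le_of_halfPlane {ι : Type*} (s : Finset ι) (z : ι → ℂ) (N : ℝ)
    (hz : ∀ i ∈ s, ‖z i‖ = 1)
    (h : ∀ w : ℂ, ‖w‖ = 1 → (#{i ∈ s | 0 ≤ (z i * w).re} : ℝ) ≤ N) :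
    ‖∑ i ∈ s, z i‖ ≤ 2 * N - #s := by
  classical
  obtain ⟨w₀, hw₀, hw₀s⟩ : ∃ w : ℂ, ‖w‖ = 1 ∧ (∑ i ∈ s, z i) * w = ‖∑ i ∈ s, z i‖ := by
    set S := ∑ i ∈ s, z i
    by_cases hS : S = 0
    · exact ⟨1, by simp, by simp [hS]⟩
    · have hS' : (‖S‖ : ℂ) ≠ 0 := by exact_mod_cast norm_ne_zero_iff.2 hS
      refine ⟨starRingEnd ℂ S / ‖S‖, ?_, ?_⟩
      · rw [norm_div, RCLike.norm_conj, Complex.norm_real, norm_norm,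
          div_self (norm_ne_zero_iff.2 hS)]
      · rw [← mul_div_assoc, Complex.mul_conj', sq, mul_div_assoc, div_self hS', mul_one]
  have hsum : ‖∑ i ∈ s, z i‖ = ∑ i ∈ s, (z i * w₀).re := by
    rw [← Complex.re_sum, ← Finset.sum_mul, hw₀s, Complex.ofReal_re]
  rw [hsum]
  have hz' : ∀ i ∈ s, (z i * w₀).re ^ 2 + (z i * w₀).im ^ 2 = 1 := by
    intro i hi
    have h1 : ‖z i * w₀‖ = 1 := by rw [norm_mul, hz i hi, hw₀, mul_one]
    have h2 := Complex.sq_norm (z i * w₀)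
    rw [h1, Complex.normSq_apply] at h2
    nlinarith
  refine sum_le_of_levels s _ _ (fun i hi => ?_) fun t ht0 ht1 => ?_
  · have := hz' i hi
    constructor <;> nlinarith [sq_nonneg (z i * w₀).im]
  -- the two half-planes bounded by the lines through `0` and the points of height `t` and `-t`
  set r := √(1 - t ^ 2) with hr
  have hr0 : 0 ≤ r := Real.sqrt_nonneg _
  have hr2 : r ^ 2 = 1 - t ^ 2 := Real.sq_sqrt (by nlinarith)
  have hnorm : ∀ e : ℝ, e ^ 2 = t ^ 2 → ‖w₀ * (⟨r, e⟩ : ℂ)‖ = 1 := by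
    intro e he
    rw [norm_mul, hw₀, one_mul]
    have h2 := Complex.sq_norm (⟨r, e⟩ : ℂ)
    rw [Complex.normSq_apply] at h2
    have h3 : ‖(⟨r, e⟩ : ℂ)‖ ^ 2 = 1 := by rw [h2]; nlinarith
    exact (pow_eq_one_iff_of_nonneg (norm_nonneg _) two_ne_zero).1 h3
  have h1 := h _ (hnorm t rfl)
  have h2 := h _ (hnorm (-t) (by ring))
  have hre : ∀ i, ∀ e : ℝ, (z i * (w₀ * (⟨r, e⟩ : ℂ))).re =
      (z i * w₀).re * r - (z i * w₀).im * e := by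
    intro i e
    rw [← mul_assoc, Complex.mul_re]
  simp only [hre] at h1 h2
  set P := {i ∈ s | 0 ≤ (z i * w₀).re * r - (z i * w₀).im * t} with hP
  set P' := {i ∈ s | 0 ≤ (z i * w₀).re * r - (z i * w₀).im * -t} with hP'
  set K := {i ∈ s | t ≤ (z i * w₀).re} with hK
  set L := {i ∈ s | t < -(z i * w₀).re} with hL
  have c1 : K ⊆ P ∩ P' := by
    intro i hi
    rw [hK, Finset.mem_filter] at hi
    obtain ⟨hi, hti⟩ := hi
    have h3 : |(z i * w₀).im| ≤ r := by
      rw [← Real.sqrt_sq_eq_abs]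
      exact Real.sqrt_le_sqrt (by nlinarith [hz' i hi])
    rw [abs_le] at h3
    rw [Finset.mem_inter, hP, hP', Finset.mem_filter, Finset.mem_filter]
    refine ⟨⟨hi, ?_⟩, ⟨hi, ?_⟩⟩ <;> nlinarith
  have c2 : s \ L ⊆ P ∪ P' := by
    intro i hi
    rw [Finset.mem_sdiff, hL, Finset.mem_filter, not_and, not_lt] at hi
    obtain ⟨hi, hti⟩ := hi
    have hti := hti hi
    rw [Finset.mem_union, hP, hP', Finset.mem_filter, Finset.mem_filter]
    rcases le_total t (z i * w₀).re with h4 | h4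
    · have : i ∈ P ∩ P' := c1 (Finset.mem_filter.2 ⟨hi, h4⟩)
      exact Or.inl (Finset.mem_filter.1 (Finset.mem_inter.1 this).1)
    · have h3 : r ≤ |(z i * w₀).im| := by
        rw [← Real.sqrt_sq_eq_abs]
        exact Real.sqrt_le_sqrt (by nlinarith [hz' i hi])
      rcases le_abs.1 h3 with h5 | h5
      · right; exact ⟨hi, by nlinarith⟩
      · left; exact ⟨hi, by nlinarith⟩
  have c3 := Finset.card_union_add_card_inter P P'
  have c4 := card_le_card c1
  have c5 := card_le_card c2
  have c6 : #(s \ L) + #L = #s := Finset.card_sdiff_add_card_eq_card (Finset.filter_subset _ _)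
  have c7 : #K + #s ≤ #P + #P' + #L := by omega
  have c8 : (#K : ℝ) + #s ≤ #P + #P' + #L := by exact_mod_cast c7
  linarith

end HalfPlane

/-! ### Half-planes are half-arcs -/

section HalfArc

variable {p : ℕ} [Fact p.Prime]

/-- The residues whose `p`-th roots of unity lie in a given closed half-plane form an arc of
length at most `(p + 1) / 2`. -/
lemma exists_halfArc (hodd : Odd p) {w : ℂ} (hw : ‖w‖ = 1) :
    ∃ c : ℤ, ∀ x : ℤ, c ≤ x → x < c + p →
      0 ≤ (ZMod.stdAddChar (x : ZMod p) * w).re → x < c + (p + 1) / 2 := by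
  have hp0 : (0 : ℝ) < p := by exact_mod_cast (Fact.out : p.Prime).pos
  have hπ := Real.pi_pos
  set φ := w.arg with hφ
  have hwφ : w = Complex.exp (φ * Complex.I) := by
    have := Complex.norm_mul_exp_arg_mul_I w
    rw [hw, Complex.ofReal_one, one_mul] at this
    exact this.symm
  -- the argument `2π y₀ / p + φ` is `-π / 2`, the beginning of the right half-plane
  set y₀ : ℝ := p * (-(Real.pi / 2) - φ) / (2 * Real.pi) with hy₀
  refine ⟨⌈y₀⌉, fun x hx1 hx2 hre => ?_⟩
  have hre' : (ZMod.stdAddChar (x : ZMod p) * w).re = Real.cos (2 * Real.pi * x / p + φ) := by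
    rw [ZMod.stdAddChar_coe, hwφ, ← Complex.exp_add, ← Complex.exp_ofReal_mul_I_re]
    congr 2
    push_cast
    ring
  rw [hre'] at hre
  by_contra! hlt
  refine absurd hre (not_le.2 ?_)
  have e1 : 2 * Real.pi * x / p + φ = -(Real.pi / 2) + 2 * Real.pi * (x - y₀) / p := by
    rw [hy₀]; field_simp; ring
  rw [e1]
  have h1 := Int.le_ceil y₀
  have h2 := Int.ceil_lt_add_one y₀
  have h3 : ((⌈y₀⌉ : ℤ) : ℝ) + (p + 1) / 2 ≤ x := by
    obtain ⟨q, hq⟩ := hodd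
    have h4 : ⌈y₀⌉ + (q + 1 : ℤ) ≤ x := by omega
    have h5 : ((⌈y₀⌉ : ℤ) : ℝ) + (q + 1) ≤ x := by exact_mod_cast h4
    have h6 : (p : ℝ) = 2 * q + 1 := by exact_mod_cast hq
    linarith
  have h4 : (x : ℝ) + 1 ≤ ⌈y₀⌉ + p := by exact_mod_cast hx2
  apply Real.cos_neg_of_pi_div_two_lt_of_lt
  · have : Real.pi < 2 * Real.pi * (x - y₀) / p := by
      rw [lt_div_iff₀ hp0]; nlinarith
    linarith
  · have : 2 * Real.pi * (x - y₀) / p < 2 * Real.pi := by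
      rw [div_lt_iff₀ hp0]; nlinarith
    linarith

/-- An exponential sum of norm larger than `2N - |A|` at the frequency `t` puts more than `N`
elements of `tA` into a half-arc. -/
lemma exists_dense_halfArc (hodd : Odd p) {A : Finset (ZMod p)} {t : ZMod p} (ht : t ≠ 0) {N : ℝ}
    (h : 2 * N - #A < ‖expSum A t‖) :
    ∃ (S : Finset ℤ) (u : ℤ), (∀ x ∈ S, (x : ZMod p) ∈ A.image (fun x => 0 + t * x)) ∧
      (∀ x ∈ S, u ≤ x ∧ x < u + (p + 1) / 2) ∧ N < #S := by
  have hnz : NeZero p := ⟨(Fact.out : p.Prime).ne_zero⟩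
  obtain ⟨w, hw, hwN⟩ : ∃ w : ℂ, ‖w‖ = 1 ∧
      N < (#{a ∈ A | 0 ≤ (ZMod.stdAddChar (t * a) * w).re} : ℝ) := by
    by_contra! hcon
    exact absurd h (not_lt.2 (norm_sum_le_of_halfPlane A (fun a => ZMod.stdAddChar (t * a)) N
      (fun a _ => AddChar.norm_apply _ _) hcon))
  obtain ⟨c, hc⟩ := exists_halfArc hodd hw
  set D := ({a ∈ A | 0 ≤ (ZMod.stdAddChar (t * a) * w).re}).image (fun x => 0 + t * x) with hD
  have hDA : ∀ x ∈ D, x ∈ A.image (fun x => 0 + t * x) ∧ 0 ≤ (ZMod.stdAddChar x * w).re := by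
    intro x hx
    obtain ⟨a, ha, rfl⟩ := Finset.mem_image.1 hx
    rw [Finset.mem_filter] at ha
    exact ⟨Finset.mem_image_of_mem _ ha.1, by rw [zero_add]; exact ha.2⟩
  refine ⟨windowLift c D, c, fun x hx => (hDA _ (mem_windowLift.1 hx).2).1, fun x hx => ?_, ?_⟩
  · obtain ⟨⟨h1, h2⟩, h3⟩ := mem_windowLift.1 hx
    exact ⟨h1, hc x h1 h2 (hDA _ h3).2⟩
  · rw [card_windowLift, hD, card_image_of_injective _ (injective_affine ht 0)]
    exact hwN

end HalfArc

/-! ### Choice of the frequency -/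

/-- The choice of `α`: for `τ = (1 + 2α) / 3` the cubic equation says `τ² (5 + 4α) = 1`, and this
contradicts the inequality that holds when all exponential sums are at most `τk`. -/
lemma numeric_contradiction {k n p α : ℝ} (hα : 4 * α ^ 3 + 9 * α ^ 2 + 6 * α - 1 = 0)
    (hα0 : 0 < α) (hn : 0 < n) (h1 : n < (2 + α) * k) (h2 : n ≤ 3 / 4 * p)
    (h : k * (p - n) ≤ ((1 + 2 * α) / 3) ^ 2 * n * (p - k)) : False := by
  set τ := (1 + 2 * α) / 3 with hτ
  have hk : 0 < k := by
    by_contra! hk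
    nlinarith
  have hτ1 : τ ^ 2 * (5 + 4 * α) = 1 := by
    rw [hτ]; nlinarith
  have hτ0 : 0 < τ ^ 2 := by rw [hτ]; positivity
  have e1 : τ ^ 2 * n < τ ^ 2 * ((2 + α) * k) := mul_lt_mul_of_pos_left h1 hτ0
  have e2 : τ ^ 2 * ((2 + α) * k) ≤ k := by
    have : τ ^ 2 * (2 + α) ≤ 1 := by nlinarith
    nlinarith
  have e3 : (4 / 3 * n) * (k - τ ^ 2 * n) ≤ p * (k - τ ^ 2 * n) :=
    mul_le_mul_of_nonneg_right (by linarith) (by linarith)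
  have e4 : n * (4 / 3 * (k - τ ^ 2 * n)) ≤ n * (k * (1 - τ ^ 2)) := by nlinarith
  have e5 := le_of_mul_le_mul_left e4 hn
  have e6 : k * (τ ^ 2 * (5 + 4 * α)) = k := by rw [hτ1, mul_one]
  nlinarith

theorem stmt0 (p : ℕ) (hp : p.Prime) (A : Finset (ZMod p)) (hA : A.Nonempty)
    (r : ℤ) (hr : ((A + A).card : ℤ) = 2 * A.card + r)
    (α : ℝ) (hα : 4 * α ^ 3 + 9 * α ^ 2 + 6 * α - 1 = 0)
    (h1 : ((A + A).card : ℝ) ≤ (2 + α) * A.card - 3)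
    (h2 : ((A + A).card : ℝ) ≤ 3 / 4 * p) :
    ∃ g : ZMod p, g ≠ 0 ∧ ∃ PA P2A : Finset (ZMod p),
      IsAPWith g PA ∧ IsAPWith g P2A ∧
      A ⊆ PA ∧ (PA.card : ℤ) ≤ A.card + r + 1 ∧
      P2A ⊆ A + A ∧ 2 * (A.card : ℤ) - 1 ≤ (P2A.card : ℤ) := by
  have : Fact p.Prime := ⟨hp⟩
  suffices h : HasProgressions A by
    obtain ⟨g, hg, P, Q, hP, hQ, e1, e2, e3, e4⟩ := h
    exact ⟨g, hg, P, Q, hP, hQ, e1, by omega, e3, by omega⟩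
  have hα0 : 0 < α := by
    by_contra! hneg
    nlinarith [sq_nonneg (4 * α + 9 / 2), sq_nonneg α,
      mul_nonneg (neg_nonneg.2 hneg) (sq_nonneg (4 * α + 9 / 2))]
  have hα1 : α < 1 / 4 := by
    by_contra! hge
    nlinarith [pow_le_pow_left₀ (by norm_num : (0 : ℝ) ≤ 1 / 4) hge 3,
      pow_le_pow_left₀ (by norm_num : (0 : ℝ) ≤ 1 / 4) hge 2]
  have hkpos : 0 < #A := Finset.card_pos.2 hA
  have hkposR : (0 : ℝ) < #A := by exact_mod_cast hkpos
  have h4 : 4 * #(A + A) ≤ 3 * p := by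
    have : (4 : ℝ) * #(A + A) ≤ 3 * p := by linarith
    exact_mod_cast this
  -- the bound `|2A| ≥ 2|A| - 1` forces `α |A| ≥ 2`, which rules out small sets
  have hcd := ZMod.cauchy_davenport hp hA hA
  have hppos := hp.pos
  have hn2 : 2 * #A ≤ #(A + A) + 1 := by omega
  have hk9 : 9 ≤ #A := by
    by_contra! hlt
    have h3 : (#A : ℝ) ≤ 8 := by exact_mod_cast Nat.lt_succ_iff.1 hlt
    have h5 : (2 : ℝ) * #A ≤ #(A + A) + 1 := by exact_mod_cast hn2
    nlinarith
  have hk : 4 * #(A + A) + 12 ≤ 9 * #A := by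
    have : (4 : ℝ) * #(A + A) + 12 ≤ 9 * #A := by nlinarith
    exact_mod_cast this
  have hodd : Odd p := hp.odd_of_ne_two (by omega)
  have hp4 : 4 * #(A + A) + 1 ≤ 3 * p := by
    obtain ⟨q, hq⟩ := hodd
    omega
  obtain ⟨t, ht, hlarge⟩ : ∃ t : ZMod p, t ≠ 0 ∧ (1 + 2 * α) / 3 * #A < ‖expSum A t‖ := by
    by_contra! hcon
    refine numeric_contradiction hα hα0 ?_ (by linarith) h2 (card_mul_le_of_expSum_le hA hcon)
    exact_mod_cast (by omega : 0 < #(A + A))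
  obtain ⟨S, u, hSA, hS, hSN⟩ := exists_dense_halfArc hodd ht
    (N := (#(A + A) + 3) / 3) (lt_of_le_of_lt (by linarith) hlarge)
  have hSn : #(A + A) + 4 ≤ 3 * #S := by
    have : (#(A + A) + 3 : ℝ) < 3 * #S := by linarith
    have : #(A + A) + 3 < 3 * #S := by exact_mod_cast this
    omega
  set B := A.image (fun x => 0 + t * x) with hB
  have hBc : #B = #A := card_image_of_injective _ (injective_affine ht _)
  have hBc2 : #(B + B) = #(A + A) := by
    rw [hB, image_affine_add, card_image_of_injective _ (injective_affine ht _)]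
  have hBP : HasProgressions B := hasProgressions_of_half hSA hS (by omega) (by omega) (by omega)
    (by omega) (by omega) (by omega)
  have hAB : A = B.image (fun x => 0 + t⁻¹ * x) := by
    rw [hB, Finset.image_image]
    conv_lhs => rw [← Finset.image_id (s := A)]
    refine Finset.image_congr fun x _ => ?_
    simp [ht]
  rw [hAB]
  exact hBP.affine (inv_ne_zero ht) 0
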